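/- Let 0 < s < 1/2 and let the collision kernel b satisfy b(cos θ)·θ^{2+2s} → K as θ → 0+ for some K > 0. Let F₀ be a Borel probability measure on ℝ³ which is not a single Dirac mass and which has finite first moment ∫_{ℝ³} |v| dF₀(v) < ∞, let ψ₀ be its characteristic function, and let ψ be a solution of the Fourier-transformed (Bobylev) homogeneous Boltzmann Cauchy problem with initial datum ψ₀, with t ↦ ψ(t,·) continuous into 𝒦¹. Then for EVERY t > 0 and every N ∈ ℕ one has ∫_{ℝ³} (1+|ξ|²)^N |ψ(t,ξ)|² dξ < ∞ (global-in-time H^∞ smoothing). -/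

import Mathlib

noncomputable section

open MeasureTheory Real Filter Metric Set
open scoped RealInnerProductSpace Topology

/-- ℝ³ as a Euclidean space. -/
abbrev E3 : Type := EuclideanSpace ℝ (Fin 3)

/-- The surface measure on the unit sphere S² ⊂ ℝ³. -/
def sphμ : Measure (sphere (0 : E3) 1) := (volume : Measure E3).toSphere

/-- The characteristic function (Fourier transform) of a Borel measure on ℝ³,
`ψ(ξ) = ∫ e^{-i v·ξ} dΨ(v)`. -/
def charFn (Ψ : Measure E3) (ξ : E3) : ℂ :=
  ∫ v, Complex.exp (-(Complex.I * (⟪v, ξ⟫ : ℂ))) ∂Ψ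

/-- `ψ` is a characteristic function of some Borel probability measure on ℝ³. -/
def IsCharFn (ψ : E3 → ℂ) : Prop :=
  ∃ Ψ : Measure E3, IsProbabilityMeasure Ψ ∧ ψ = charFn Ψ

/-- Finiteness of `‖φ - 1‖_α`, i.e. the quantitative part of membership in `𝒦^α`. -/
def KBdd (α : ℝ) (φ : E3 → ℂ) : Prop :=
  ∃ C : ℝ, ∀ ξ : E3, ξ ≠ 0 → ‖φ ξ - 1‖ ≤ C * ‖ξ‖ ^ α

/-- Membership in the space `𝒦^α`. -/
def memK (α : ℝ) (φ : E3 → ℂ) : Prop := IsCharFn φ ∧ KBdd α φ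

/-- The distance `‖φ - φ'‖_α = sup_{ξ ≠ 0} |φ(ξ) - φ'(ξ)|/|ξ|^α` on `𝒦^α`. -/
def Kdist (α : ℝ) (φ φ' : E3 → ℂ) : ℝ :=
  ⨆ ξ : {ξ : E3 // ξ ≠ 0}, ‖φ ξ.1 - φ' ξ.1‖ / ‖(ξ.1 : E3)‖ ^ α

/-- `ξ⁺ = ξ/2 + (|ξ|/2)σ`. -/
def xiPlus (ξ : E3) (σ : sphere (0 : E3) 1) : E3 := (1/2 : ℝ) • ξ + (‖ξ‖ / 2) • (σ : E3)

/-- `ξ⁻ = ξ/2 - (|ξ|/2)σ`. -/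
def xiMinus (ξ : E3) (σ : sphere (0 : E3) 1) : E3 := (1/2 : ℝ) • ξ - (‖ξ‖ / 2) • (σ : E3)

/-- The Bobylev collision integrand at time `t`, frequency `ξ`, direction `σ`. -/
def bobylevIntegrand (b : ℝ → ℝ) (ψ : ℝ → E3 → ℂ) (t : ℝ) (ξ : E3)
    (σ : sphere (0 : E3) 1) : ℂ :=
  (b (⟪ξ, (σ : E3)⟫ / ‖ξ‖) : ℂ) *
    (ψ t (xiPlus ξ σ) * ψ t (xiMinus ξ σ) - ψ t ξ)

/-- `ψ : [0,∞) × ℝ³ → ℂ` is a solution of the Fourier-transformed (Bobylev)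
homogeneous Boltzmann Cauchy problem with collision kernel `b` and initial datum `ψ₀`. -/
structure IsBobylevSolution (b : ℝ → ℝ) (ψ : ℝ → E3 → ℂ) (ψ₀ : E3 → ℂ) : Prop where
  cont : ContinuousOn (fun p : ℝ × E3 => ψ p.1 p.2) (Set.Ici 0 ×ˢ Set.univ)
  init : ψ 0 = ψ₀
  isCharFn : ∀ t ≥ 0, IsCharFn (ψ t)
  integrable : ∀ t ≥ 0, ∀ ξ : E3, Integrable (bobylevIntegrand b ψ t ξ) sphμ
  eq : ∀ t ≥ 0, ∀ ξ : E3, HasDerivWithinAt (fun τ => ψ τ ξ)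
      (∫ σ, bobylevIntegrand b ψ t ξ σ ∂sphμ) (Set.Ici 0) t

/-- Continuity of `t ↦ ψ(t,·)` from `[0,∞)` into the metric space `(𝒦^α, ‖·‖_α)`. -/
def KContinuous (α : ℝ) (ψ : ℝ → E3 → ℂ) : Prop :=
  ∀ t₀ ∈ Set.Ici (0:ℝ), Tendsto (fun t => Kdist α (ψ t) (ψ t₀)) (𝓝[Set.Ici (0:ℝ)] t₀) (𝓝 0)

/-- The angular singularity assumption `b(cos θ) θ^{2+2s} → K` as `θ → 0+`. -/
def KernelSingular (b : ℝ → ℝ) (s K : ℝ) : Prop :=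
  Tendsto (fun θ : ℝ => b (Real.cos θ) * θ ^ (2 + 2*s)) (𝓝[>] 0) (𝓝 K)

/-- `φ` is a nonnegative real characteristic function (cosine transform of a probability). -/
def IsPhi (φ : E3 → ℝ) : Prop :=
  (∀ ξ, 0 ≤ φ ξ) ∧ ∃ μ : Measure E3, IsProbabilityMeasure μ ∧ ∀ ξ, φ ξ = ∫ u, Real.cos ⟪u, ξ⟫ ∂μ

/-- The real collision integrand. -/
def qInt (b : ℝ → ℝ) (φ : E3 → ℝ) (ξ : E3) (σ : sphere (0 : E3) 1) : ℝ :=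
  b (⟪ξ, (σ : E3)⟫ / ‖ξ‖) * (φ (xiPlus ξ σ) * φ (xiMinus ξ σ) - φ ξ)

/-- The differential inequality satisfied by `|ψ|²`. -/
structure PhiSol (b : ℝ → ℝ) (φ : ℝ → E3 → ℝ) : Prop where
  cont : ContinuousOn (fun p : ℝ × E3 => φ p.1 p.2) (Set.Ici 0 ×ˢ Set.univ)
  isPhi : ∀ t ≥ 0, IsPhi (φ t)
  integrable : ∀ t ≥ 0, ∀ ξ : E3, Integrable (qInt b (φ t) ξ) sphμ
  deriv : ∀ t ≥ 0, ∀ ξ : E3, ∃ d, HasDerivWithinAt (fun τ => φ τ ξ) d (Set.Ici 0) t ∧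
    d ≤ ∫ σ, qInt b (φ t) ξ σ ∂sphμ

lemma charFn_conj_mul (Ψ : Measure E3) [IsProbabilityMeasure Ψ] (ξ : E3) :
    ‖charFn Ψ ξ‖ ^ 2 = ∫ u, Real.cos ⟪u, ξ⟫ ∂((Ψ.prod Ψ).map (fun p : E3 × E3 => p.1 - p.2)) := by
  have hcont : Continuous fun u : E3 => Real.cos ⟪u, ξ⟫ := by fun_prop
  rw [integral_map (by fun_prop) hcont.aestronglyMeasurable]
  have key : ((‖charFn Ψ ξ‖ ^ 2 : ℝ) : ℂ)
      = ∫ p : E3 × E3, Complex.exp (-(Complex.I * (⟪p.1, ξ⟫ : ℂ))) *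
          Complex.exp ((Complex.I * (⟪p.2, ξ⟫ : ℂ))) ∂(Ψ.prod Ψ) := by
    rw [integral_prod_mul (fun v : E3 => Complex.exp (-(Complex.I * (⟪v, ξ⟫ : ℂ))))
      (fun v : E3 => Complex.exp ((Complex.I * (⟪v, ξ⟫ : ℂ))))]
    have h1 : ((‖charFn Ψ ξ‖ ^ 2 : ℝ) : ℂ) = charFn Ψ ξ * (starRingEnd ℂ) (charFn Ψ ξ) := by
      rw [Complex.mul_conj, Complex.normSq_eq_norm_sq]
    rw [h1]
    congr 1
    unfold charFn
    rw [← integral_conj]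
    congr 1
    ext v
    rw [← Complex.exp_conj]
    simp
  have h2 := congrArg Complex.re key
  rw [Complex.ofReal_re] at h2
  rw [h2]
  have hintg : Integrable (fun p : E3 × E3 => Complex.exp (-(Complex.I * (⟪p.1, ξ⟫ : ℂ))) *
          Complex.exp ((Complex.I * (⟪p.2, ξ⟫ : ℂ)))) (Ψ.prod Ψ) := by
    refine Integrable.of_bound (C := 1) ?_ (ae_of_all _ ?_)
    · apply Continuous.aestronglyMeasurable
      fun_prop
    · intro p
      rw [← Complex.exp_add, Complex.norm_exp]
      simp
  have h3 := integral_re hintg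
  simp only [RCLike.re_to_complex] at h3
  rw [← h3]
  congr 1
  ext p
  rw [← Complex.exp_add, inner_sub_left]
  have : -(Complex.I * (⟪p.1, ξ⟫ : ℂ)) + Complex.I * (⟪p.2, ξ⟫ : ℂ)
    = ((-(⟪p.1, ξ⟫ - ⟪p.2, ξ⟫) : ℝ) : ℂ) * Complex.I := by
    push_cast
    ring
  rw [this, Complex.exp_ofReal_mul_I_re, Real.cos_neg]

lemma isPhi_of_charFn {ψ : E3 → ℂ} (h : IsCharFn ψ) : IsPhi (fun ξ => ‖ψ ξ‖ ^ 2) := by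
  obtain ⟨Ψ, hΨ, rfl⟩ := h
  refine ⟨fun ξ => by positivity, (Ψ.prod Ψ).map (fun p : E3 × E3 => p.1 - p.2), ?_, ?_⟩
  · exact Measure.isProbabilityMeasure_map (by fun_prop)
  · intro ξ
    exact charFn_conj_mul Ψ ξ

lemma norm_charFn_le {ψ : E3 → ℂ} (h : IsCharFn ψ) (ξ : E3) : ‖ψ ξ‖ ≤ 1 := by
  obtain ⟨Ψ, hΨ, rfl⟩ := h
  unfold charFn
  refine (norm_integral_le_integral_norm _).trans ?_
  have : ∀ v : E3, ‖Complex.exp (-(Complex.I * (⟪v, ξ⟫ : ℂ)))‖ = 1 := by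
    intro v
    rw [Complex.norm_exp]; simp
  simp [this]

lemma IsPhi.intg {μ : Measure E3} [IsProbabilityMeasure μ] (ξ : E3) :
    Integrable (fun u : E3 => Real.cos ⟪u, ξ⟫) μ := by
  refine Integrable.of_bound (C := 1) ?_ (ae_of_all _ ?_)
  · apply Continuous.aestronglyMeasurable
    fun_prop
  · intro p
    exact Real.abs_cos_le_one _

lemma IsPhi.le_one {φ : E3 → ℝ} (h : IsPhi φ) (ξ : E3) : φ ξ ≤ 1 := by
  obtain ⟨-, μ, hμ, h⟩ := h
  rw [h]
  calc _ ≤ ∫ u, (1:ℝ) ∂μ := integral_mono (IsPhi.intg ξ) (integrable_const _)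
        (fun u => Real.cos_le_one _)
    _ = 1 := by simp

lemma IsPhi.zero {φ : E3 → ℝ} (h : IsPhi φ) : φ 0 = 1 := by
  obtain ⟨-, μ, hμ, h⟩ := h
  rw [h]; simp

lemma IsPhi.neg {φ : E3 → ℝ} (h : IsPhi φ) (ξ : E3) : φ (-ξ) = φ ξ := by
  obtain ⟨-, μ, hμ, h⟩ := h
  rw [h, h]; simp

/-- parallelogram inequality -/
lemma IsPhi.para {φ : E3 → ℝ} (h : IsPhi φ) (a c : E3) :
    (1 - φ (a + c)) + (1 - φ (a - c)) ≤ 2 * (1 - φ a) + 2 * (1 - φ c) := by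
  obtain ⟨-, μ, hμ, h⟩ := h
  have key : 2 * φ a + 2 * φ c ≤ 2 + φ (a + c) + φ (a - c) := by
    simp only [h]
    have := integral_mono (μ := μ) (((IsPhi.intg a).const_mul 2).add ((IsPhi.intg c).const_mul 2))
      (((integrable_const (2:ℝ)).add (IsPhi.intg (a + c))).add (IsPhi.intg (a - c))) ?_
    · simp only [Pi.add_apply] at this
      rw [integral_add ((IsPhi.intg a).const_mul 2) ((IsPhi.intg c).const_mul 2),
        integral_add (f := fun x => 2 + Real.cos ⟪x, a + c⟫)
          ((integrable_const (2:ℝ)).add (IsPhi.intg (a + c))) (IsPhi.intg (a - c)),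
        integral_const_mul, integral_const_mul] at this
      rw [integral_add (integrable_const (2:ℝ)) (IsPhi.intg (a + c))] at this
      simpa using this
    · intro u
      simp only [Pi.add_apply, inner_add_right, inner_sub_right, Real.cos_add, Real.cos_sub]
      nlinarith [mul_nonneg (sub_nonneg.2 (Real.cos_le_one ⟪u, a⟫)) (sub_nonneg.2 (Real.cos_le_one ⟪u, c⟫))]
  linarith

lemma IsPhi.double {φ : E3 → ℝ} (h : IsPhi φ) (a : E3) :
    1 - φ ((2:ℝ) • a) ≤ 4 * (1 - φ a) := by
  have := h.para a a
  rw [sub_self, h.zero, ← two_smul ℝ a] at this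
  linarith

lemma norm_sq_xiPlus (ξ : E3) (σ : sphere (0 : E3) 1) :
    ‖xiPlus ξ σ‖ ^ 2 = ‖ξ‖ ^ 2 * ((1 + ⟪ξ, (σ : E3)⟫ / ‖ξ‖) / 2) := by
  have hσ : ‖(σ : E3)‖ = 1 := by simp
  unfold xiPlus
  rw [@norm_add_sq_real, inner_smul_left, inner_smul_right, norm_smul, norm_smul, hσ]
  rcases eq_or_ne ξ 0 with rfl | h
  · simp
  · have : ‖ξ‖ ≠ 0 := norm_ne_zero_iff.2 h
    simp
    field_simp
    ring

lemma norm_sq_xiMinus (ξ : E3) (σ : sphere (0 : E3) 1) :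
    ‖xiMinus ξ σ‖ ^ 2 = ‖ξ‖ ^ 2 * ((1 - ⟪ξ, (σ : E3)⟫ / ‖ξ‖) / 2) := by
  have hσ : ‖(σ : E3)‖ = 1 := by simp
  unfold xiMinus
  rw [@norm_sub_sq_real, inner_smul_left, inner_smul_right, norm_smul, norm_smul, hσ]
  rcases eq_or_ne ξ 0 with rfl | h
  · simp
  · have : ‖ξ‖ ≠ 0 := norm_ne_zero_iff.2 h
    simp
    field_simp
    ring

lemma xi_add (ξ : E3) (σ : sphere (0 : E3) 1) : xiPlus ξ σ + xiMinus ξ σ = ξ := by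
  unfold xiPlus xiMinus
  rw [add_add_sub_cancel, ← add_smul]
  norm_num

lemma cos_mem (ξ : E3) (σ : sphere (0 : E3) 1) : |⟪ξ, (σ : E3)⟫ / ‖ξ‖| ≤ 1 := by
  have hσ : ‖(σ : E3)‖ = 1 := by simp
  rw [abs_div, abs_norm]
  apply div_le_one_of_le₀ _ (norm_nonneg _)
  simpa [hσ] using abs_real_inner_le_norm ξ (σ : E3)

instance : IsFiniteMeasure sphμ := by unfold sphμ; infer_instance

instance : Measure.IsOpenPosMeasure sphμ := by unfold sphμ; infer_instance

lemma phiSol_of_sol {b : ℝ → ℝ} (hbm : Measurable b) (hb : ∀ x, 0 ≤ b x) {ψ : ℝ → E3 → ℂ} {ψ₀ : E3 → ℂ}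
    (h : IsBobylevSolution b ψ ψ₀) : PhiSol b (fun t ξ => ‖ψ t ξ‖ ^ 2) := by
  have hcξ : ∀ t ≥ 0, Continuous (ψ t) := by
    intro t ht
    have : ContinuousOn ((fun p : ℝ × E3 => ψ p.1 p.2) ∘ (fun ξ : E3 => (t, ξ))) univ :=
      h.cont.comp (by fun_prop) (fun ξ _ => ⟨ht, mem_univ _⟩)
    exact continuousOn_univ.1 this
  have hI : ∀ t ≥ 0, ∀ ξ : E3, Integrable (qInt b (fun ξ => ‖ψ t ξ‖ ^ 2) ξ) sphμ := by
    intro t ht ξ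
    have hi := (h.integrable t ht ξ).norm.const_mul 2
    refine hi.mono' ?_ (ae_of_all _ ?_)
    · have hc := hcξ t ht
      apply Measurable.aestronglyMeasurable
      unfold qInt
      apply Measurable.mul
      · exact hbm.comp (by fun_prop)
      · apply Continuous.measurable
        unfold xiPlus xiMinus
        fun_prop
    · intro σ
      unfold qInt bobylevIntegrand
      rw [norm_mul, norm_mul, Complex.norm_real, mul_left_comm]
      gcongr
      set A := ψ t (xiPlus ξ σ) * ψ t (xiMinus ξ σ) with hA
      have hA1 : ‖A‖ ≤ 1 := by
        rw [hA, norm_mul]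
        exact mul_le_one₀ (norm_charFn_le (h.isCharFn t ht) _) (norm_nonneg _)
          (norm_charFn_le (h.isCharFn t ht) _)
      have hP1 := norm_charFn_le (h.isCharFn t ht) ξ
      rw [← mul_pow, ← norm_mul, ← hA]
      have : ‖A‖ ^ 2 - ‖ψ t ξ‖ ^ 2 = (‖A‖ + ‖ψ t ξ‖) * (‖A‖ - ‖ψ t ξ‖) := by ring
      rw [this, norm_mul]
      gcongr
      · rw [Real.norm_of_nonneg (by positivity)]
        linarith
      · exact abs_norm_sub_norm_le _ _
  refine ⟨?_, fun t ht => isPhi_of_charFn (h.isCharFn t ht), hI, ?_⟩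
  · exact (h.cont.norm).pow 2
  · intro t ht ξ
    have hd := h.eq t ht ξ
    have hd2 := hd.norm_sq
    refine ⟨_, hd2, ?_⟩
    have hin := h.integrable t ht ξ
    rw [← integral_inner hin, ← integral_const_mul]
    refine integral_mono ((hin.const_inner _).const_mul 2) (hI t ht ξ) ?_
    intro σ
    simp only [qInt, bobylevIntegrand]
    rw [← mul_pow, ← norm_mul]
    set A := ψ t (xiPlus ξ σ) * ψ t (xiMinus ξ σ) with hA
    rw [← Complex.real_smul, inner_smul_right, mul_left_comm]
    apply mul_le_mul_of_nonneg_left _ (hb _)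
    rw [inner_sub_right, real_inner_self_eq_norm_sq]
    have := sq_nonneg ‖A - ψ t ξ‖
    rw [@norm_sub_sq_real, real_inner_comm] at this
    linarith

lemma exists_lt_one_of_not_dirac (F : Measure E3) [IsProbabilityMeasure F]
    (hnd : ∀ v₀ : E3, F {v₀} ≠ 1) : ∃ ξ, ‖charFn F ξ‖ ^ 2 < 1 := by
  by_contra! hcon
  set μ := (F.prod F).map (fun p : E3 × E3 => p.1 - p.2) with hμ
  have : IsProbabilityMeasure μ := Measure.isProbabilityMeasure_map (by fun_prop)
  have h1 : ∀ ξ : E3, ∀ᵐ u ∂μ, Real.cos ⟪u, ξ⟫ = 1 := by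
    intro ξ
    have h2 : ∫ u, (1 - Real.cos ⟪u, ξ⟫) ∂μ ≤ 0 := by
      rw [integral_sub (integrable_const _) (IsPhi.intg ξ), hμ, ← charFn_conj_mul]
      have := hcon ξ
      rw [← hμ]
      have e : ∫ _u : E3, (1:ℝ) ∂μ = 1 := by simp
      rw [e]; linarith
    have h3 : 0 ≤ᵐ[μ] fun u => 1 - Real.cos ⟪u, ξ⟫ :=
      ae_of_all _ fun u => sub_nonneg.2 (Real.cos_le_one _)
    have h4 : ∫ u, (1 - Real.cos ⟪u, ξ⟫) ∂μ = 0 := le_antisymm h2 (integral_nonneg_of_ae h3)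
    rw [integral_eq_zero_iff_of_nonneg_ae h3 ((integrable_const _).sub (IsPhi.intg ξ))] at h4
    filter_upwards [h4] with u hu
    have : 1 - Real.cos ⟪u, ξ⟫ = 0 := hu
    linarith
  have h5 : ∀ᵐ u ∂μ, ∀ (i : Fin 3) (n : ℕ),
      Real.cos ⟪u, ((n + 1 : ℝ)⁻¹) • EuclideanSpace.single i (1:ℝ)⟫ = 1 := by
    rw [ae_all_iff]; intro i
    rw [ae_all_iff]; intro n
    exact h1 _
  have h6 : ∀ᵐ u ∂μ, u = 0 := by
    filter_upwards [h5] with u hu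
    ext i
    obtain ⟨n, hn⟩ := exists_nat_gt (|u i|)
    have h7 := hu i n
    have h8 : ⟪u, ((n + 1 : ℝ)⁻¹) • EuclideanSpace.single i (1:ℝ)⟫ = (n + 1 : ℝ)⁻¹ * u i := by
      rw [inner_smul_right, EuclideanSpace.inner_single_right]; simp
    rw [h8] at h7
    have hn0 : (0:ℝ) < n + 1 := by positivity
    have habs : |(n + 1 : ℝ)⁻¹ * u i| < 1 := by
      rw [abs_mul, abs_of_pos (inv_pos.2 hn0), inv_mul_lt_iff₀ hn0]; linarith
    have hb := abs_lt.1 habs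
    have hpi := Real.pi_gt_three
    rw [Real.cos_eq_one_iff_of_lt_of_lt (by linarith) (by linarith)] at h7
    have : (n + 1 : ℝ)⁻¹ ≠ 0 := inv_ne_zero hn0.ne'
    simpa [this, hn0.ne'] using h7
  have h7 : ∀ᵐ p ∂(F.prod F), p.1 - p.2 = 0 := by
    exact ae_of_ae_map (by fun_prop) h6
  have h8 := Measure.ae_ae_of_ae_prod h7
  obtain ⟨v, hv⟩ := h8.exists
  apply hnd v
  rw [← prob_compl_eq_zero_iff (measurableSet_singleton v)]
  rw [ae_iff] at hv
  convert hv using 2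
  ext w
  simp [sub_eq_zero, eq_comm]

lemma IsPhi.continuous {φ : E3 → ℝ} (h : IsPhi φ) : Continuous φ := by
  obtain ⟨-, μ, hμ, h⟩ := h
  have : φ = fun ξ => ∫ u, Real.cos ⟪u, ξ⟫ ∂μ := funext h
  rw [this]
  refine continuous_of_dominated (bound := fun _ => 1) ?_ ?_ (integrable_const _) ?_
  · intro ξ; exact (IsPhi.intg ξ).aestronglyMeasurable
  · intro ξ; exact ae_of_all _ fun u => Real.abs_cos_le_one _
  · exact ae_of_all _ fun u => by fun_prop

/-- truncated quadratic form -/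
def qM (μ : Measure E3) (M : ℝ) (x : E3) : ℝ := (1/2) * ∫ u in closedBall (0:E3) M, ⟪u, x⟫ ^ 2 ∂μ

def trM (μ : Measure E3) (M : ℝ) : ℝ := (1/2) * ∫ u in closedBall (0:E3) M, ‖u‖ ^ 2 ∂μ

lemma intOn_cont {μ : Measure E3} [IsProbabilityMeasure μ] {f : E3 → ℝ} (hf : Continuous f) (M : ℝ) :
    IntegrableOn f (closedBall (0:E3) M) μ :=
  hf.continuousOn.integrableOn_compact (isCompact_closedBall _ _)

lemma qM_int {μ : Measure E3} [IsProbabilityMeasure μ] (M : ℝ) (x : E3) :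
    IntegrableOn (fun u : E3 => ⟪u, x⟫ ^ 2) (closedBall (0:E3) M) μ :=
  intOn_cont (by fun_prop) M

lemma qM_smul (μ : Measure E3) (M c : ℝ) (x : E3) : qM μ M (c • x) = c ^ 2 * qM μ M x := by
  unfold qM
  simp only [inner_smul_right, mul_pow]
  rw [integral_const_mul]; ring

lemma qM_nonneg (μ : Measure E3) (M : ℝ) (x : E3) : 0 ≤ qM μ M x := by
  unfold qM
  have := integral_nonneg (μ := μ.restrict (closedBall (0:E3) M)) (f := fun u : E3 => ⟪u, x⟫ ^ 2)
    (fun u => sq_nonneg _)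
  linarith

lemma qM_para (μ : Measure E3) [IsProbabilityMeasure μ] (M : ℝ) (x z : E3) :
    qM μ M (x + z) + qM μ M (x - z) = 2 * qM μ M x + 2 * qM μ M z := by
  unfold qM
  have h := integral_add (qM_int (μ := μ) M (x + z)) (qM_int M (x - z))
  have h' := integral_add ((qM_int (μ := μ) M x).const_mul 2) ((qM_int M z).const_mul 2)
  rw [integral_const_mul, integral_const_mul] at h'
  have e : ∀ u : E3, ⟪u, x + z⟫ ^ 2 + ⟪u, x - z⟫ ^ 2 = 2 * ⟪u, x⟫ ^ 2 + 2 * ⟪u, z⟫ ^ 2 := by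
    intro u
    rw [inner_add_right, inner_sub_right]; ring
  simp only [e] at h
  linarith

lemma qM_le (μ : Measure E3) [IsProbabilityMeasure μ] (M : ℝ) (x : E3) :
    qM μ M x ≤ trM μ M * ‖x‖ ^ 2 := by
  unfold qM trM
  have := setIntegral_mono (μ := μ) (s := closedBall (0:E3) M) (qM_int M x)
    ((intOn_cont (f := fun u : E3 => ‖u‖ ^ 2) (by fun_prop) M).mul_const (‖x‖ ^ 2)) (fun u => by
      have := abs_real_inner_le_norm u x
      show ⟪u, x⟫ ^ 2 ≤ ‖u‖ ^ 2 * ‖x‖ ^ 2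
      rw [← sq_abs, ← mul_pow]
      gcongr)
  rw [integral_mul_const] at this
  linarith

lemma qM_mono (μ : Measure E3) [IsProbabilityMeasure μ] {M M' : ℝ} (h : M ≤ M') (x : E3) :
    qM μ M x ≤ qM μ M' x := by
  unfold qM
  have := setIntegral_mono_set (qM_int (μ := μ) M' x) (ae_of_all _ fun u => sq_nonneg ⟪u, x⟫)
    (closedBall_subset_closedBall h).eventuallyLE
  linarith

lemma trM_mono (μ : Measure E3) [IsProbabilityMeasure μ] {M M' : ℝ} (h : M ≤ M') :
    trM μ M ≤ trM μ M' := by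
  unfold trM
  have := setIntegral_mono_set (intOn_cont (μ := μ) (f := fun u : E3 => ‖u‖ ^ 2) (by fun_prop) M')
    (ae_of_all _ fun u => sq_nonneg ‖u‖)
    (closedBall_subset_closedBall h).eventuallyLE
  linarith

lemma qM_lower {μ : Measure E3} [IsProbabilityMeasure μ] {φ : E3 → ℝ}
    (h : ∀ ξ, φ ξ = ∫ u, Real.cos ⟪u, ξ⟫ ∂μ) {M : ℝ} (ξ : E3) :
    qM μ M ξ - M ^ 4 * ‖ξ‖ ^ 4 ≤ 1 - φ ξ := by
  have hintg : Integrable (fun u : E3 => 1 - Real.cos ⟪u, ξ⟫) μ := (integrable_const _).sub (IsPhi.intg ξ)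
  have e1 : 1 - φ ξ = ∫ u, (1 - Real.cos ⟪u, ξ⟫) ∂μ := by
    rw [integral_sub (integrable_const _) (IsPhi.intg ξ), h]; simp
  have e2 : ∫ u in closedBall (0:E3) M, (1 - Real.cos ⟪u, ξ⟫) ∂μ ≤ ∫ u, (1 - Real.cos ⟪u, ξ⟫) ∂μ :=
    setIntegral_le_integral hintg (ae_of_all _ fun u => sub_nonneg.2 (Real.cos_le_one _))
  have e3 : ∫ u in closedBall (0:E3) M, (1/2 * ⟪u, ξ⟫ ^ 2 - M ^ 4 * ‖ξ‖ ^ 4) ∂μ ≤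
      ∫ u in closedBall (0:E3) M, (1 - Real.cos ⟪u, ξ⟫) ∂μ := by
    refine setIntegral_mono_on (((qM_int M ξ).const_mul _).sub (integrable_const _)) hintg.integrableOn
      measurableSet_closedBall ?_
    intro u hu
    have hu' : ‖u‖ ≤ M := by simpa using hu
    have h1 : |⟪u, ξ⟫| ≤ M * ‖ξ‖ := (abs_real_inner_le_norm u ξ).trans (by gcongr)
    have h2 : ⟪u, ξ⟫ ^ 4 ≤ M ^ 4 * ‖ξ‖ ^ 4 := by
      rw [← mul_pow]
      have : ⟪u, ξ⟫ ^ 4 = |⟪u, ξ⟫| ^ 4 := by rw [Even.pow_abs (by decide)]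
      rw [this]
      gcongr
    set x := ⟪u, ξ⟫
    have h3 : 1/2 * x ^ 2 - x ^ 4 ≤ 1 - Real.cos x := by
      by_cases hx : |x| ≤ 1
      · have := (abs_le.1 (Real.cos_bound hx)).2
        have e : |x| ^ 4 = x ^ 4 := Even.pow_abs (by decide) x
        rw [e] at this
        have : 0 ≤ x ^ 4 := by positivity
        linarith
      · have : 1 < x ^ 2 := by
          rw [← sq_abs]; push Not at hx; nlinarith
        have h4 := Real.cos_le_one x
        nlinarith
    linarith
  rw [integral_sub ((qM_int M ξ).const_mul _) (integrable_const _), integral_const_mul] at e3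
  have e4 : ∫ u in closedBall (0:E3) M, (M ^ 4 * ‖ξ‖ ^ 4) ∂μ ≤ M ^ 4 * ‖ξ‖ ^ 4 := by
    have : 0 ≤ M ^ 4 * ‖ξ‖ ^ 4 := by positivity
    rw [setIntegral_const, smul_eq_mul]
    have h1 : μ.real (closedBall 0 M) ≤ 1 := measureReal_le_one
    nlinarith
  unfold qM
  linarith

lemma qM_upper {μ : Measure E3} [IsProbabilityMeasure μ] {φ : E3 → ℝ}
    (h : ∀ ξ, φ ξ = ∫ u, Real.cos ⟪u, ξ⟫ ∂μ) {M : ℝ} (ξ : E3) :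
    1 - φ ξ ≤ qM μ M ξ + 2 * μ.real (closedBall (0:E3) M)ᶜ := by
  have hintg : Integrable (fun u : E3 => 1 - Real.cos ⟪u, ξ⟫) μ := (integrable_const _).sub (IsPhi.intg ξ)
  have e1 : 1 - φ ξ = ∫ u, (1 - Real.cos ⟪u, ξ⟫) ∂μ := by
    rw [integral_sub (integrable_const _) (IsPhi.intg ξ), h]; simp
  rw [e1, ← integral_add_compl (measurableSet_closedBall (x := (0:E3)) (ε := M)) hintg]
  apply add_le_add
  · unfold qM
    rw [← integral_const_mul]
    refine setIntegral_mono hintg.integrableOn ((qM_int M ξ).const_mul _) ?_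
    intro u
    have := Real.one_sub_sq_div_two_le_cos (x := ⟪u, ξ⟫)
    show 1 - Real.cos ⟪u, ξ⟫ ≤ 1/2 * ⟪u, ξ⟫ ^ 2
    linarith
  · have := setIntegral_mono (μ := μ) (s := (closedBall (0:E3) M)ᶜ) hintg.integrableOn
      (integrable_const (2:ℝ)).integrableOn (fun u => by
        have := Real.neg_one_le_cos ⟪u, ξ⟫
        show 1 - Real.cos ⟪u, ξ⟫ ≤ 2
        linarith)
    rw [setIntegral_const, smul_eq_mul] at this
    linarith

lemma tail_tendsto (μ : Measure E3) [IsProbabilityMeasure μ] :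
    Tendsto (fun M : ℕ => μ.real (closedBall (0:E3) (M:ℝ))ᶜ) atTop (𝓝 0) := by
  have h : Tendsto (fun M : ℕ => μ (closedBall (0:E3) (M:ℝ))ᶜ) atTop (𝓝 (μ (⋂ M : ℕ, (closedBall (0:E3) (M:ℝ))ᶜ))) := by
    refine tendsto_measure_iInter_atTop (fun M => measurableSet_closedBall.compl.nullMeasurableSet) ?_ ⟨0, measure_ne_top _ _⟩
    intro a c hac
    exact compl_subset_compl.2 (closedBall_subset_closedBall (by exact_mod_cast hac))
  have e : (⋂ M : ℕ, (closedBall (0:E3) (M:ℝ))ᶜ) = ∅ := by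
    ext x
    simp only [mem_iInter, mem_compl_iff, mem_closedBall, dist_zero_right, mem_empty_iff_false, iff_false,
      not_forall, not_not]
    exact ⟨_, (exists_nat_ge ‖x‖).choose_spec⟩
  rw [e, measure_empty] at h
  have := (ENNReal.tendsto_toReal (ENNReal.zero_ne_top)).comp h
  simpa [Measure.real, Function.comp_def] using this

/-- action of a linear isometry on the sphere -/
def sphMap (R : E3 ≃ₗᵢ[ℝ] E3) (σ : sphere (0 : E3) 1) : sphere (0 : E3) 1 :=
  ⟨R σ, by simp⟩

lemma sphMap_cont (R : E3 ≃ₗᵢ[ℝ] E3) : Continuous (sphMap R) := by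
  unfold sphMap
  exact Continuous.subtype_mk (by fun_prop) _

open scoped Pointwise in
lemma sphMap_mp (R : E3 ≃ₗᵢ[ℝ] E3) : MeasurePreserving (sphMap R) sphμ sphμ := by
  refine ⟨(sphMap_cont R).measurable, ?_⟩
  ext s hs
  rw [Measure.map_apply (sphMap_cont R).measurable hs]
  unfold sphμ
  rw [Measure.toSphere_apply' _ hs, Measure.toSphere_apply' _ ((sphMap_cont R).measurable hs)]
  congr 1
  have hset : Ioo (0:ℝ) 1 • ((↑) '' (sphMap R ⁻¹' s) : Set E3) = R ⁻¹' (Ioo (0:ℝ) 1 • ((↑) '' s : Set E3)) := by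
    ext x
    simp only [Set.mem_smul, mem_preimage, mem_image]
    constructor
    · rintro ⟨r, hr, z, ⟨σ, hσ, rfl⟩, rfl⟩
      exact ⟨r, hr, _, ⟨_, hσ, rfl⟩, by simp [sphMap]⟩
    · rintro ⟨r, hr, z, ⟨σ, hσ, rfl⟩, hx⟩
      refine ⟨r, hr, R.symm σ, ⟨sphMap R.symm σ, ?_, rfl⟩, ?_⟩
      · have : sphMap R (sphMap R.symm σ) = σ := by
          ext1; simp [sphMap]
        rw [this]; exact hσ
      · apply R.injective
        simp [← hx]
  rw [hset]
  exact R.measurePreserving.measure_preimage_equiv (f := R.toMeasurableEquiv) _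

lemma exists_rot (e e' : E3) (he : ‖e‖ = 1) (he' : ‖e'‖ = 1) : ∃ R : E3 ≃ₗᵢ[ℝ] E3, R e = e' :=
  ⟨(ℝ ∙ (e - e'))ᗮ.reflection, Submodule.reflection_sub (by rw [he, he'])⟩

lemma exists_rot' (e e' : E3) (he : e ≠ 0) (he' : e' ≠ 0) :
    ∃ R : E3 ≃ₗᵢ[ℝ] E3, ∀ σ, ⟪e', R σ⟫ / ‖e'‖ = ⟪e, σ⟫ / ‖e‖ := by
  obtain ⟨R, hR⟩ := exists_rot ((‖e‖⁻¹) • e) ((‖e'‖⁻¹) • e')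
    (by rw [norm_smul, norm_inv, norm_norm, inv_mul_cancel₀ (norm_ne_zero_iff.2 he)])
    (by rw [norm_smul, norm_inv, norm_norm, inv_mul_cancel₀ (norm_ne_zero_iff.2 he')])
  refine ⟨R, fun σ => ?_⟩
  have h1 := R.inner_map_map ((‖e‖⁻¹) • e) σ
  rw [hR, inner_smul_left, inner_smul_left] at h1
  simp only [conj_trivial] at h1
  rw [div_eq_inv_mul, div_eq_inv_mul, h1]

lemma zonal_int (g : ℝ → ℝ) (e e' : E3) (he : e ≠ 0) (he' : e' ≠ 0)
    (h : Integrable (fun σ : sphere (0:E3) 1 => g (⟪e', (σ : E3)⟫ / ‖e'‖)) sphμ) :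
    Integrable (fun σ : sphere (0:E3) 1 => g (⟪e, (σ : E3)⟫ / ‖e‖)) sphμ := by
  obtain ⟨R, hR⟩ := exists_rot' e e' he he'
  have := (sphMap_mp R).integrable_comp_of_integrable h
  refine this.congr (ae_of_all _ fun σ => ?_)
  simp only [Function.comp, sphMap, hR]

lemma zonal_eq (g : ℝ → ℝ) (hg : Measurable g) (e e' : E3) (he : e ≠ 0) (he' : e' ≠ 0) :
    ∫ σ : sphere (0:E3) 1, g (⟪e', (σ : E3)⟫ / ‖e'‖) ∂sphμ
      = ∫ σ : sphere (0:E3) 1, g (⟪e, (σ : E3)⟫ / ‖e‖) ∂sphμ := by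
  obtain ⟨R, hR⟩ := exists_rot' e e' he he'
  have h1 := (sphMap_mp R).map_eq
  conv_lhs => rw [← h1]
  rw [integral_map (sphMap_cont R).measurable.aemeasurable]
  · simp only [sphMap, hR]
  · apply Measurable.aestronglyMeasurable
    exact hg.comp (by fun_prop)

open scoped Pointwise in
lemma band_e0 (a : ℝ) (ha : 0 < a) (ha1 : a ≤ 1) :
    ENNReal.ofReal (3 * a / 256) ≤ sphμ {σ : sphere (0:E3) 1 | a / 64 ≤ 1 - (σ : E3) 0 ∧ 1 - (σ : E3) 0 ≤ a} := by
  have hms : MeasurableSet {σ : sphere (0:E3) 1 | a / 64 ≤ 1 - (σ : E3) 0 ∧ 1 - (σ : E3) 0 ≤ a} := by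
    have hc : Continuous fun σ : sphere (0:E3) 1 => 1 - (σ : E3) 0 := by fun_prop
    exact ((isClosed_le continuous_const hc).inter (isClosed_le hc continuous_const)).measurableSet
  unfold sphμ
  rw [Measure.toSphere_apply' _ hms]
  set lo : Fin 3 → ℝ := ![1/4, √a/8, √a/8]
  set hi : Fin 3 → ℝ := ![1/2, √a/4, √a/4]
  have hsa : √a ^ 2 = a := Real.sq_sqrt ha.le
  have hsa0 : 0 < √a := Real.sqrt_pos.2 ha
  have hvol : volume ((WithLp.ofLp : E3 → (Fin 3 → ℝ)) ⁻¹' (pi univ fun i => Ioo (lo i) (hi i)))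
      = ENNReal.ofReal (a / 256) := by
    rw [(PiLp.volume_preserving_ofLp (Fin 3)).measure_preimage
      ((MeasurableSet.univ_pi fun i => measurableSet_Ioo).nullMeasurableSet), Real.volume_pi_Ioo,
      Fin.prod_univ_three, ← ENNReal.ofReal_mul, ← ENNReal.ofReal_mul]
    · congr 1
      simp [lo, hi]
      nlinarith
    · simp [lo, hi]; rw [← sub_nonneg]; ring_nf; positivity
    · simp [lo, hi]; norm_num
  have hsub : ((WithLp.ofLp : E3 → (Fin 3 → ℝ)) ⁻¹' (pi univ fun i => Ioo (lo i) (hi i))) ⊆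
      Ioo (0:ℝ) 1 • ((↑) '' {σ : sphere (0:E3) 1 | a / 64 ≤ 1 - (σ : E3) 0 ∧ 1 - (σ : E3) 0 ≤ a} : Set E3) := by
    intro v hv
    simp only [mem_preimage, Set.mem_pi, mem_univ, forall_true_left] at hv
    obtain ⟨h0, h0'⟩ := hv 0
    obtain ⟨h1, h1'⟩ := hv 1
    obtain ⟨h2, h2'⟩ := hv 2
    simp only [lo, hi] at h0 h0' h1 h1' h2 h2'
    simp at h0 h0' h1 h1' h2 h2'
    have hn : ‖v‖ ^ 2 = v 0 ^ 2 + v 1 ^ 2 + v 2 ^ 2 := by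
      rw [EuclideanSpace.norm_sq_eq, Fin.sum_univ_three]; simp
    have q0 : v 1 ^ 2 + v 2 ^ 2 ≤ a / 8 := by nlinarith
    have q1 : a / 32 ≤ v 1 ^ 2 + v 2 ^ 2 := by nlinarith
    have n1 : ‖v‖ ≤ 3/4 := by
      apply le_of_sq_le_sq _ (by norm_num)
      nlinarith
    have n0 : v 0 ≤ ‖v‖ := by
      apply le_of_sq_le_sq _ (norm_nonneg _)
      nlinarith
    have npos : 0 < ‖v‖ := by linarith
    have hmem : (‖v‖⁻¹) • v ∈ sphere (0:E3) 1 := by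
      simp [norm_smul, npos.ne']
    rw [Set.mem_smul]
    refine ⟨‖v‖, ⟨npos, by linarith⟩, (‖v‖⁻¹) • v, ⟨⟨_, hmem⟩, ?_, rfl⟩, ?_⟩
    · have key : (‖v‖ - v 0) * (‖v‖ + v 0) = v 1 ^ 2 + v 2 ^ 2 := by nlinarith
      have e : 1 - ((‖v‖⁻¹) • v) 0 = (‖v‖ - v 0) / ‖v‖ := by
        simp; field_simp
      simp only [Set.mem_ofPred_eq]
      rw [e, le_div_iff₀ npos, div_le_iff₀ npos]
      have hd : 0 ≤ ‖v‖ - v 0 := by linarith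
      constructor
      · nlinarith
      · nlinarith
    · rw [smul_smul, mul_inv_cancel₀ npos.ne', one_smul]
  calc ENNReal.ofReal (3 * a / 256) = 3 * ENNReal.ofReal (a / 256) := by
        rw [mul_div_assoc, ENNReal.ofReal_mul (by norm_num)]; simp
    _ ≤ _ := by
        rw [← hvol]
        have : (Module.finrank ℝ E3 : ENNReal) = 3 := by simp
        rw [this]
        gcongr

lemma band (a : ℝ) (ha : 0 < a) (ha1 : a ≤ 1) (e : E3) (he : e ≠ 0) :
    3 * a / 256 ≤ sphμ.real {σ : sphere (0:E3) 1 | a / 64 ≤ 1 - ⟪e, (σ : E3)⟫ / ‖e‖ ∧ 1 - ⟪e, (σ : E3)⟫ / ‖e‖ ≤ a} := by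
  set S := {σ : sphere (0:E3) 1 | a / 64 ≤ 1 - (σ : E3) 0 ∧ 1 - (σ : E3) 0 ≤ a} with hS
  have hms : MeasurableSet S := by
    have hc : Continuous fun σ : sphere (0:E3) 1 => 1 - (σ : E3) 0 := by fun_prop
    exact ((isClosed_le continuous_const hc).inter (isClosed_le hc continuous_const)).measurableSet
  set e0 : E3 := EuclideanSpace.single 0 1
  have he0 : e0 ≠ 0 := by simp [e0]
  obtain ⟨R, hR⟩ := exists_rot' e e0 he he0
  have hR' : ∀ σ, (R σ) 0 = ⟪e, σ⟫ / ‖e‖ := by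
    intro σ
    rw [← hR]
    simp [e0, EuclideanSpace.inner_single_left]
  have h1 := (sphMap_mp R).measure_preimage hms.nullMeasurableSet
  have h2 := band_e0 a ha ha1
  rw [← hS, ← h1] at h2
  have h3 : sphMap R ⁻¹' S = {σ : sphere (0:E3) 1 | a / 64 ≤ 1 - ⟪e, (σ : E3)⟫ / ‖e‖ ∧ 1 - ⟪e, (σ : E3)⟫ / ‖e‖ ≤ a} := by
    ext σ
    simp only [hS, sphMap, mem_preimage, Set.mem_ofPred_eq, hR']
  rw [h3] at h2
  exact (ENNReal.ofReal_le_iff_le_toReal (measure_ne_top _ _)).1 h2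

lemma kernel_lower {b : ℝ → ℝ} {s K : ℝ} (hs0 : 0 < s) (hK : 0 < K) (h : KernelSingular b s K) :
    ∃ k > 0, ∃ c0 : ℝ, 0 < c0 ∧ c0 < 1 ∧ ∀ c, c0 < c → c < 1 → k * (1 - c) ^ (-(1 + s)) ≤ b c := by
  have h1 : ∀ᶠ θ in 𝓝[>] (0:ℝ), K / 2 < b (Real.cos θ) * θ ^ (2 + 2*s) :=
    h.eventually (lt_mem_nhds (by linarith))
  obtain ⟨θ1, hθ1, h2⟩ := mem_nhdsGT_iff_exists_Ioo_subset.1 h1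
  set θ0 := min θ1 1 with hθ0
  have hθpos : 0 < θ0 := lt_min hθ1 one_pos
  have hθ01 : θ0 ≤ 1 := min_le_right _ _
  have hpi := Real.pi_gt_three
  refine ⟨K / 2 * 5 ^ (-(1 + s)), by positivity, Real.cos θ0, ?_, ?_, ?_⟩
  · exact Real.cos_pos_of_mem_Ioo ⟨by linarith, by linarith⟩
  · have := Real.cos_lt_cos_of_nonneg_of_le_pi_div_two le_rfl (by linarith : θ0 ≤ π / 2) hθpos
    simpa using this
  · intro c hc hc1
    have hcm : -1 ≤ c := by
      have := Real.neg_one_le_cos θ0; linarith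
    set θ := Real.arccos c with hθ
    have hcos : Real.cos θ = c := Real.cos_arccos hcm hc1.le
    have hθp : 0 < θ := Real.arccos_pos.2 hc1
    have hθlt : θ < θ0 := by
      have : Real.arccos c < Real.arccos (Real.cos θ0) :=
        Real.arccos_lt_arccos (by have := Real.neg_one_le_cos θ0; linarith) hc hc1.le
      rwa [Real.arccos_cos hθpos.le (by linarith)] at this
    have h3 := h2 (show θ ∈ Ioo 0 θ1 from ⟨hθp, hθlt.trans_le (min_le_left _ _)⟩)
    simp only [Set.mem_ofPred_eq, hcos] at h3
    have h4 := Real.cos_le_one_sub_mul_cos_sq (x := θ) (by rw [abs_of_pos hθp]; linarith)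
    rw [hcos] at h4
    have h5 : θ ^ 2 ≤ 5 * (1 - c) := by
      have hpi2 : π ^ 2 < 10 := by nlinarith [Real.pi_lt_d2, Real.pi_pos]
      have h6 : 2 / π ^ 2 * θ ^ 2 ≤ 1 - c := by linarith
      have h7 : θ ^ 2 * (1/5) ≤ 2 / π ^ 2 * θ ^ 2 := by
        rw [mul_comm]
        refine mul_le_mul_of_nonneg_right ?_ (sq_nonneg _)
        rw [div_le_div_iff₀ (by norm_num) (by positivity)]
        linarith
      linarith
    have h6 : θ ^ (2 + 2 * s) ≤ (5 * (1 - c)) ^ (1 + s) := by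
      have : θ ^ (2 + 2 * s) = (θ ^ 2) ^ (1 + s) := by
        rw [← Real.rpow_natCast, ← Real.rpow_mul hθp.le]
        congr 1; push_cast; ring
      rw [this]
      gcongr
    have hX : 0 < (5 * (1 - c)) ^ (1 + s) := by
      apply Real.rpow_pos_of_pos; linarith
    have hθs : 0 < θ ^ (2 + 2 * s) := Real.rpow_pos_of_pos hθp _
    have hbpos : 0 < b c := by
      by_contra hneg
      push Not at hneg
      nlinarith
    rw [mul_assoc, ← Real.mul_rpow (by norm_num) (by linarith), Real.rpow_neg (by linarith)]
    rw [← div_eq_mul_inv, div_le_iff₀ hX]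
    nlinarith

lemma first_touch {C : Set E3} (hC : IsCompact C) {t1 T : ℝ} (u : ℝ → E3 → ℝ)
    (hu : ContinuousOn (fun p : ℝ × E3 => u p.1 p.2) (Icc t1 T ×ˢ C))
    (h0 : ∀ ξ ∈ C, u t1 ξ < 0)
    (hd : ∀ t, t1 < t → t ≤ T → ∀ ξ ∈ C, (∀ η ∈ C, u t η ≤ 0) → u t ξ = 0 →
      ∃ d < 0, HasDerivAt (fun τ => u τ ξ) d t) :
    ∀ t, t1 ≤ t → t ≤ T → ∀ ξ ∈ C, u t ξ < 0 := by
  by_contra! hcon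
  obtain ⟨t', ht1', htT', ξ', hξ', hpos⟩ := hcon
  have hcomp : IsCompact (Icc t1 T ×ˢ C) := isCompact_Icc.prod hC
  set Kb := (Icc t1 T ×ˢ C) ∩ (fun p : ℝ × E3 => u p.1 p.2) ⁻¹' (Ici 0) with hKb
  have hKc : IsCompact Kb := by
    apply hcomp.of_isClosed_subset _ inter_subset_left
    exact hu.preimage_isClosed_of_isClosed hcomp.isClosed isClosed_Ici
  have hKne : Kb.Nonempty := ⟨(t', ξ'), ⟨⟨ht1', htT'⟩, hξ'⟩, hpos⟩
  obtain ⟨⟨t, ξ⟩, ⟨⟨⟨h1, h2⟩, hξ⟩, hp⟩, hmin⟩ := hKc.exists_isMinOn hKne continuous_fst.continuousOn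
  simp only [mem_preimage, mem_Ici] at hp h1 h2 hξ
  have hlt : t1 < t := by
    rcases h1.lt_or_eq with h | h
    · exact h
    · exfalso
      have := h0 ξ hξ
      rw [h] at this; linarith
  have hneg : ∀ τ, t1 ≤ τ → τ < t → ∀ η ∈ C, u τ η < 0 := by
    intro τ hτ1 hτ η hη
    by_contra! hc
    have : (τ, η) ∈ Kb := ⟨⟨⟨hτ1, hτ.le.trans h2⟩, hη⟩, hc⟩
    have := hmin this
    simp at this
    linarith
  have hle : ∀ η ∈ C, u t η ≤ 0 := by
    intro η hη
    have hc : ContinuousWithinAt (fun τ => u τ η) (Icc t1 T) t := by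
      have := (hu (t, η) ⟨⟨h1, h2⟩, hη⟩)
      exact ContinuousWithinAt.comp (f := fun τ : ℝ => (τ, η)) (x := t) this (by fun_prop) (fun τ hτ => ⟨hτ, hη⟩)
    have hc2 : Tendsto (fun τ => u τ η) (𝓝[Ico t1 t] t) (𝓝 (u t η)) :=
      hc.mono (fun x hx => ⟨hx.1, hx.2.le.trans h2⟩)
    have hne : (𝓝[Ico t1 t] t).NeBot := by
      rw [← mem_closure_iff_nhdsWithin_neBot, closure_Ico hlt.ne]
      exact ⟨h1, le_rfl⟩
    refine le_of_tendsto hc2 ?_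
    filter_upwards [self_mem_nhdsWithin] with τ hτ
    exact (hneg τ hτ.1 hτ.2 η hη).le
  have hz : u t ξ = 0 := le_antisymm (hle ξ hξ) hp
  obtain ⟨d, hd0, hd⟩ := hd t hlt h2 ξ hξ hle hz
  have hs := (hasDerivWithinAt_iff_tendsto_slope' (s := Ioo t1 t) (by simp)).1 hd.hasDerivWithinAt
  have hne : (𝓝[Ioo t1 t] t).NeBot := by
    rw [← mem_closure_iff_nhdsWithin_neBot, closure_Ioo hlt.ne]
    exact ⟨h1, le_rfl⟩
  have : 0 ≤ d := by
    refine ge_of_tendsto hs ?_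
    filter_upwards [self_mem_nhdsWithin] with τ hτ
    rw [slope_def_field, hz, sub_zero]
    apply div_nonneg_of_nonpos _ (by linarith [hτ.2])
    exact (hneg τ hτ.1.le hτ.2 ξ hξ).le
  linarith

lemma PhiSol.hasDeriv {b : ℝ → ℝ} {φ : ℝ → E3 → ℝ} (h : PhiSol b φ) {t : ℝ} (ht : 0 < t) (ξ : E3) :
    ∃ d, HasDerivAt (fun τ => φ τ ξ) d t ∧ d ≤ ∫ σ, qInt b (φ t) ξ σ ∂sphμ := by
  obtain ⟨d, hd, hle⟩ := h.deriv t ht.le ξ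
  exact ⟨d, hd.hasDerivAt (Ici_mem_nhds ht), hle⟩

/-- lower bound property of the kernel -/
def KerLow (b : ℝ → ℝ) (s k c0 : ℝ) : Prop :=
  0 < k ∧ 0 < c0 ∧ c0 < 1 ∧ ∀ c, c0 < c → c < 1 → k * (1 - c) ^ (-(1 + s)) ≤ b c

lemma KerLow.pos {b : ℝ → ℝ} {s k c0 : ℝ} (h : KerLow b s k c0) {c : ℝ} (h1 : c0 < c) (h2 : c < 1) :
    0 < b c := by
  refine lt_of_lt_of_le ?_ (h.2.2.2 c h1 h2)
  exact mul_pos h.1 (Real.rpow_pos_of_pos (by linarith) _)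

lemma cont_xiPlus (ξ : E3) : Continuous (xiPlus ξ) := by unfold xiPlus; fun_prop
lemma cont_xiMinus (ξ : E3) : Continuous (xiMinus ξ) := by unfold xiMinus; fun_prop

lemma cap_one {b : ℝ → ℝ} (hb : ∀ x, 0 ≤ b x) {s k c0 : ℝ} (hk : KerLow b s k c0) {φ : ℝ → E3 → ℝ}
    (h : PhiSol b φ) {t : ℝ} (ht : 0 < t) {ξ : E3} (h1 : φ t ξ = 1)
    (σ : sphere (0:E3) 1) (hσ : c0 < ⟪ξ, (σ:E3)⟫ / ‖ξ‖) (hσ1 : ⟪ξ, (σ:E3)⟫ / ‖ξ‖ < 1) :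
    φ t (xiMinus ξ σ) = 1 := by
  have hP := h.isPhi t ht.le
  obtain ⟨d, hd, hle⟩ := h.hasDeriv ht ξ
  have hmax : IsLocalMax (fun τ => φ τ ξ) t := by
    filter_upwards [lt_mem_nhds ht] with τ hτ
    rw [h1]
    exact (h.isPhi τ hτ.le).le_one ξ
  have hd0 := hmax.hasDerivAt_eq_zero hd
  rw [hd0] at hle
  have hprod : ∀ σ, φ t (xiPlus ξ σ) * φ t (xiMinus ξ σ) ≤ 1 := fun σ =>
    mul_le_one₀ (hP.le_one _) (hP.1 _) (hP.le_one _)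
  have hneg : ∀ σ, 0 ≤ - qInt b (φ t) ξ σ := by
    intro σ
    unfold qInt
    have h3 := mul_nonneg (hb (⟪ξ, (σ : E3)⟫ / ‖ξ‖)) (sub_nonneg.2 (hprod σ))
    rw [h1]; linarith
  have hintg0 : ∫ σ, - qInt b (φ t) ξ σ ∂sphμ = 0 := by
    apply le_antisymm
    · rw [integral_neg]; linarith
    · exact integral_nonneg hneg
  rw [integral_eq_zero_iff_of_nonneg hneg (h.integrable t ht.le ξ).neg] at hintg0
  have hc : Continuous fun σ : sphere (0:E3) 1 => φ t (xiPlus ξ σ) * φ t (xiMinus ξ σ) := by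
    have := hP.continuous
    exact (this.comp (cont_xiPlus ξ)).mul (this.comp (cont_xiMinus ξ))
  have hcc : Continuous fun σ : sphere (0:E3) 1 => ⟪ξ, (σ:E3)⟫ / ‖ξ‖ := by fun_prop
  set O := {σ : sphere (0:E3) 1 | c0 < ⟪ξ, (σ:E3)⟫ / ‖ξ‖ ∧ ⟪ξ, (σ:E3)⟫ / ‖ξ‖ < 1 ∧
    φ t (xiPlus ξ σ) * φ t (xiMinus ξ σ) < 1} with hO
  have hOo : IsOpen O :=
    (isOpen_lt continuous_const hcc).inter ((isOpen_lt hcc continuous_const).inter (isOpen_lt hc continuous_const))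
  have hO0 : sphμ O = 0 := by
    have h4 : ∀ᵐ σ ∂sphμ, σ ∉ O := by
      filter_upwards [hintg0] with σ hσ hmem
      have h5 : - qInt b (φ t) ξ σ = 0 := hσ
      unfold qInt at h5
      rw [h1] at h5
      have h6 := mul_pos (hk.pos hmem.1 hmem.2.1) (sub_pos.2 hmem.2.2)
      linarith
    rw [ae_iff] at h4
    simpa using h4
  have hOe := (hOo.measure_eq_zero_iff sphμ).1 hO0
  by_contra hne
  have hlt : φ t (xiMinus ξ σ) < 1 := lt_of_le_of_ne (hP.le_one _) hne
  have : σ ∈ O := by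
    refine ⟨hσ, hσ1, ?_⟩
    nlinarith [hP.le_one (xiPlus ξ σ), hP.1 (xiMinus ξ σ), hP.1 (xiPlus ξ σ)]
  rw [hOe] at this
  exact this

lemma IsPhi.one_add {φ : E3 → ℝ} (h : IsPhi φ) {a c : E3} (ha : φ a = 1) (hc : φ c = 1) :
    φ (a + c) = 1 ∧ φ (a - c) = 1 := by
  have := h.para a c
  have h1 := h.le_one (a + c)
  have h2 := h.le_one (a - c)
  constructor <;> linarith

lemma IsPhi.one_nsmul {φ : E3 → ℝ} (h : IsPhi φ) {a : E3} (ha : φ a = 1) (n : ℕ) :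
    φ (n • a) = 1 := by
  induction n with
  | zero => simpa using h.zero
  | succ n ih => rw [succ_nsmul]; exact (h.one_add ih ha).1

lemma perp_one {b : ℝ → ℝ} (hb : ∀ x, 0 ≤ b x) {s k c0 : ℝ} (hk : KerLow b s k c0) {φ : ℝ → E3 → ℝ}
    (h : PhiSol b φ) {t : ℝ} (ht : 0 < t) {ξ : E3} (hξ : ξ ≠ 0) (h1 : φ t ξ = 1)
    (η : E3) (hη : ⟪ξ, η⟫ = 0) : φ t η = 1 := by
  have hP := h.isPhi t ht.le
  have hr : 0 < ‖ξ‖ := norm_pos_iff.2 hξ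
  have hc01 := hk.2.2.1
  have hc00 := hk.2.1
  -- small vectors first
  have small : ∀ ω : E3, ω ≠ 0 → ⟪ξ, ω⟫ = 0 → ‖ω‖ ^ 2 < (1 - c0 ^ 2) * ‖ξ‖ ^ 2 → φ t ω = 1 := by
    intro ω hω hp hs
    have hω0 : 0 < ‖ω‖ := norm_pos_iff.2 hω
    set q := ‖ω‖ ^ 2 / ‖ξ‖ ^ 2 with hq
    have hq0 : 0 < q := by positivity
    have hq1 : q < 1 - c0 ^ 2 := by rw [hq, div_lt_iff₀ (by positivity)]; exact hs
    have hq2 : 0 ≤ 1 - q := by nlinarith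
    set c := √(1 - q) with hc
    have hcsq : c ^ 2 = 1 - q := Real.sq_sqrt hq2
    have hcnn : 0 ≤ c := Real.sqrt_nonneg _
    have hc1 : c < 1 := by nlinarith
    have hc0 : c0 < c := by
      rw [hc]; apply Real.lt_sqrt_of_sq_lt; linarith
    have hnorm : ∀ ε : ℝ, ε ^ 2 = 1 → ‖(c / ‖ξ‖) • ξ + (ε / ‖ξ‖) • ω‖ = 1 := by
      intro ε hε
      have : ‖(c / ‖ξ‖) • ξ + (ε / ‖ξ‖) • ω‖ ^ 2 = 1 := by
        rw [@norm_add_sq_real, inner_smul_left, inner_smul_right, hp, norm_smul, norm_smul, mul_pow, mul_pow]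
        simp only [norm_div, div_pow, Real.norm_eq_abs, sq_abs]
        rw [hε, hcsq, hq]
        field_simp
        ring
      nlinarith [norm_nonneg ((c / ‖ξ‖) • ξ + (ε / ‖ξ‖) • ω)]
    have hcos : ∀ ε : ℝ, ⟪ξ, (c / ‖ξ‖) • ξ + (ε / ‖ξ‖) • ω⟫ / ‖ξ‖ = c := by
      intro ε
      rw [inner_add_right, inner_smul_right, inner_smul_right, hp, real_inner_self_eq_norm_sq]
      field_simp
      ring
    have hm : ∀ ε : ℝ, (hε : ε ^ 2 = 1) →
        φ t ((1/2 : ℝ) • ξ - (‖ξ‖ / 2) • ((c / ‖ξ‖) • ξ + (ε / ‖ξ‖) • ω)) = 1 := by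
      intro ε hε
      refine cap_one hb hk h ht h1 ⟨(c / ‖ξ‖) • ξ + (ε / ‖ξ‖) • ω, by simpa using hnorm ε hε⟩ ?_ ?_
      · simp only [hcos]; exact hc0
      · simp only [hcos]; exact hc1
    have h3 := (hP.one_add (hm (-1) (by norm_num)) (hm 1 (by norm_num))).2
    convert h3 using 2
    have : (‖ξ‖ / 2) * (1 / ‖ξ‖) = 1/2 := by field_simp
    have h2 : (‖ξ‖ / 2) * (-1 / ‖ξ‖) = -(1/2) := by field_simp
    simp only [smul_add, smul_smul, this, h2]
    module
  rcases eq_or_ne η 0 with rfl | hη0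
  · exact hP.zero
  have hpos : 0 < (1 - c0 ^ 2) * ‖ξ‖ ^ 2 := by
    have : 0 < 1 - c0 ^ 2 := by nlinarith
    positivity
  obtain ⟨n, hn⟩ := exists_nat_gt (‖η‖ ^ 2 / ((1 - c0 ^ 2) * ‖ξ‖ ^ 2))
  rw [div_lt_iff₀ hpos] at hn
  have hn1 : (1:ℝ) ≤ n + 1 := by linarith [Nat.cast_nonneg (α := ℝ) n]
  have hs := small (((n + 1 : ℝ)⁻¹) • η) (smul_ne_zero (by positivity) hη0)
    (by rw [inner_smul_right, hη, mul_zero]) (by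
      rw [norm_smul, mul_pow, norm_inv, Real.norm_of_nonneg (by positivity), inv_pow, inv_mul_lt_iff₀ (by positivity)]
      nlinarith)
  have h4 := hP.one_nsmul hs (n + 1)
  convert h4 using 2
  rw [← Nat.cast_smul_eq_nsmul ℝ, smul_smul]
  push_cast
  rw [mul_inv_cancel₀ (by positivity), one_smul]

lemma exists_perp (ξ : E3) (_hξ : ξ ≠ 0) : ∃ η : E3, η ≠ 0 ∧ ⟪ξ, η⟫ = 0 := by
  by_cases h : ξ 0 = 0 ∧ ξ 1 = 0
  · refine ⟨EuclideanSpace.single 0 1, by simp, ?_⟩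
    rw [EuclideanSpace.inner_single_right]; simp [h.1]
  · refine ⟨WithLp.toLp 2 ![-(ξ 1), ξ 0, 0], ?_, ?_⟩
    · intro h0
      apply h
      have h1 := congrArg (fun v : E3 => v 0) h0
      have h2 := congrArg (fun v : E3 => v 1) h0
      simp at h1 h2
      exact ⟨h2, h1⟩
    · simp [PiLp.inner_apply, Fin.sum_univ_three]; ring

lemma rigidity {b : ℝ → ℝ} (hb : ∀ x, 0 ≤ b x) {s k c0 : ℝ} (hk : KerLow b s k c0) {φ : ℝ → E3 → ℝ}
    (h : PhiSol b φ) {t : ℝ} (ht : 0 < t) {ξ : E3} (hξ : ξ ≠ 0) (h1 : φ t ξ = 1) : ∀ x, φ t x = 1 := by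
  have hP := h.isPhi t ht.le
  obtain ⟨η, hη0, hη⟩ := exists_perp ξ hξ
  have h2 := perp_one hb hk h ht hξ h1
  have h3 := perp_one hb hk h ht hη0 (h2 η hη)
  intro x
  set a := (⟪η, x⟫ / ‖η‖ ^ 2) • η with ha
  have hn : ‖η‖ ≠ 0 := norm_ne_zero_iff.2 hη0
  have e1 : φ t a = 1 := h2 a (by rw [ha, inner_smul_right, hη, mul_zero])
  have e2 : φ t (x - a) = 1 := h3 (x - a) (by
    rw [inner_sub_right, ha, inner_smul_right, real_inner_self_eq_norm_sq]; field_simp; ring)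
  simpa using (hP.one_add e2 e1).1

lemma nd {b : ℝ → ℝ} (hb : ∀ x, 0 ≤ b x) {s k c0 : ℝ} (hk : KerLow b s k c0) {φ : ℝ → E3 → ℝ}
    (h : PhiSol b φ) {t : ℝ} (ht : 0 < t) (hne : ∃ ξ, φ t ξ < 1) {ρ : ℝ} (hρ : 0 < ρ) :
    ∃ δ > 0, ∃ t1, 0 < t1 ∧ t1 < t ∧ ∀ τ, t1 ≤ τ → τ ≤ t → ∀ ξ : E3, ‖ξ‖ ≤ ρ → δ * ‖ξ‖ ^ 2 ≤ 1 - φ τ ξ := by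
  have hpos : ∀ ξ : E3, ξ ≠ 0 → φ t ξ < 1 := by
    intro ξ hξ
    by_contra hc
    have h1 : φ t ξ = 1 := le_antisymm ((h.isPhi t ht.le).le_one ξ) (not_lt.1 hc)
    obtain ⟨x, hx⟩ := hne
    rw [rigidity hb hk h ht hξ h1 x] at hx
    exact lt_irrefl _ hx
  set A : Set E3 := closedBall 0 ρ \ ball 0 (ρ/2) with hA
  have hAc : IsCompact A := (isCompact_closedBall _ _).diff isOpen_ball
  have hAne : A.Nonempty := by
    refine ⟨EuclideanSpace.single 0 ρ, ?_⟩
    simp [hA, abs_of_pos hρ, hρ.le]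
  have hA0 : ∀ ξ ∈ A, ξ ≠ 0 := by
    rintro ξ hξ rfl
    apply hξ.2
    simp [hρ]
  obtain ⟨ξm, hξm, hm⟩ := hAc.exists_isMaxOn hAne (h.isPhi t ht.le).continuous.continuousOn
  set m := φ t ξm with hmdef
  have hm1 : m < 1 := hpos _ (hA0 _ hξm)
  set m' := (1 + m) / 2 with hm'
  have hcomp : IsCompact (Icc 0 t ×ˢ A) := isCompact_Icc.prod hAc
  set Kb := (Icc 0 t ×ˢ A) ∩ (fun p : ℝ × E3 => φ p.1 p.2) ⁻¹' (Ici m') with hKb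
  have hcont : ContinuousOn (fun p : ℝ × E3 => φ p.1 p.2) (Icc 0 t ×ˢ A) :=
    h.cont.mono (fun p hp => ⟨hp.1.1, mem_univ _⟩)
  have hKc : IsCompact Kb := by
    apply hcomp.of_isClosed_subset _ inter_subset_left
    exact hcont.preimage_isClosed_of_isClosed hcomp.isClosed isClosed_Ici
  have himg : IsClosed (Prod.fst '' Kb) := (hKc.image continuous_fst).isClosed
  have htn : t ∉ Prod.fst '' Kb := by
    rintro ⟨⟨t', ξ⟩, ⟨⟨_, hξ⟩, hp⟩, rfl⟩
    have h5 := hm hξ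
    simp at h5 hp hmdef
    linarith
  have hnb : (Prod.fst '' Kb)ᶜ ∩ Ioi 0 ∈ 𝓝 t := inter_mem (himg.isOpen_compl.mem_nhds htn) (Ioi_mem_nhds ht)
  obtain ⟨l, hl, hsub⟩ := exists_Ioc_subset_of_mem_nhds hnb ⟨t - 1, by linarith⟩
  have hbd : ∀ τ, l < τ → τ ≤ t → ∀ ξ ∈ A, 1 - m' ≤ 1 - φ τ ξ := by
    intro τ h1 h2 ξ hξ
    by_contra hc
    push Not at hc
    have h3 := hsub ⟨h1, h2⟩
    apply h3.1
    exact ⟨(τ, ξ), ⟨⟨⟨(show 0 < τ from h3.2).le, h2⟩, hξ⟩, by simp; linarith⟩, rfl⟩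
  set t1 := (max l 0 + t) / 2 with ht1
  have hmaxl : max l 0 < t := max_lt hl ht
  refine ⟨(1 - m') / ρ ^ 2, by apply div_pos _ (by positivity); linarith, t1, ?_, ?_, ?_⟩
  · have := le_max_right l 0; linarith
  · linarith
  intro τ hτ1 hτ2 ξ hξ
  have hlτ : l < τ := by have := le_max_left l 0; linarith
  have h0τ : 0 ≤ τ := by have := le_max_right l 0; linarith
  have hP := h.isPhi τ h0τ
  have key : ∀ n : ℕ, ∀ ξ : E3, ρ * (1/2) ^ n ≤ ‖ξ‖ → ‖ξ‖ ≤ ρ → (1 - m') / ρ ^ 2 * ‖ξ‖ ^ 2 ≤ 1 - φ τ ξ := by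
    have base : ∀ ξ : E3, ρ / 2 ≤ ‖ξ‖ → ‖ξ‖ ≤ ρ → (1 - m') / ρ ^ 2 * ‖ξ‖ ^ 2 ≤ 1 - φ τ ξ := by
      intro ξ h1 h2
      refine le_trans ?_ (hbd τ hlτ hτ2 ξ ⟨by simpa using h2, by simpa using h1⟩)
      rw [div_mul_eq_mul_div, div_le_iff₀ (by positivity)]
      have : 0 ≤ 1 - m' := by linarith
      gcongr
    intro n
    induction n with
    | zero =>
      intro ξ h1 h2
      exact base ξ (by simp at h1; linarith) h2
    | succ n ih =>
      intro ξ h1 h2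
      by_cases h3 : ρ / 2 ≤ ‖ξ‖
      · exact base ξ h3 h2
      · push Not at h3
        have hn2 : ‖(2:ℝ) • ξ‖ = 2 * ‖ξ‖ := by rw [norm_smul]; simp
        have h4 := ih ((2:ℝ) • ξ) (by rw [hn2]; rw [pow_succ] at h1; linarith) (by rw [hn2]; linarith)
        have h5 := hP.double ξ
        rw [hn2] at h4
        have : (1 - m') / ρ ^ 2 * (2 * ‖ξ‖) ^ 2 = 4 * ((1 - m') / ρ ^ 2 * ‖ξ‖ ^ 2) := by ring
        linarith
  rcases eq_or_ne ξ 0 with rfl | hξ0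
  · simp [hP.zero]
  · have hp : 0 < ‖ξ‖ / ρ := div_pos (norm_pos_iff.2 hξ0) hρ
    obtain ⟨n, hn⟩ := exists_pow_lt_of_lt_one hp (by norm_num : (1/2:ℝ) < 1)
    rw [lt_div_iff₀ hρ] at hn
    exact key n ξ (by linarith) hξ

lemma w_subadd {s : ℝ} (hs0 : 0 ≤ s) (hs1 : s ≤ 1) {x z : ℝ} (hx : 0 ≤ x) (hz : 0 ≤ z) :
    (1 + (x + z)) ^ s - 1 ≤ ((1 + x) ^ s - 1) + ((1 + z) ^ s - 1) := by
  rcases eq_or_lt_of_le (add_nonneg hx hz) with h | h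
  · have : x = 0 := by linarith
    have : z = 0 := by linarith
    subst_vars; simp
  · have hc := Real.concaveOn_rpow hs0 hs1
    have m1 : (1 + (x + z)) ∈ Ici (0:ℝ) := by simp; linarith
    have m2 : (1:ℝ) ∈ Ici (0:ℝ) := by simp
    have h1 := hc.2 m1 m2 (div_nonneg hx h.le) (div_nonneg hz h.le) (by field_simp)
    have h2 := hc.2 m1 m2 (div_nonneg hz h.le) (div_nonneg hx h.le) (by field_simp; ring)
    simp only [smul_eq_mul, Real.one_rpow, mul_one] at h1 h2
    have e1 : x / (x + z) * (1 + (x + z)) + z / (x + z) = 1 + x := by field_simp; ring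
    have e2 : z / (x + z) * (1 + (x + z)) + x / (x + z) = 1 + z := by field_simp; ring
    rw [e1] at h1
    rw [e2] at h2
    have e3 : x / (x + z) + z / (x + z) = 1 := by field_simp
    have e4 : x / (x + z) * (1 + (x + z)) ^ s + z / (x + z) * (1 + (x + z)) ^ s = (1 + (x + z)) ^ s := by
      rw [← add_mul, e3, one_mul]
    linarith

set_option maxHeartbeats 4000000 in
lemma mp2 {b : ℝ → ℝ} (hb : ∀ x, 0 ≤ b x) {s k c0 : ℝ} (hs0 : 0 < s) (hs1 : s ≤ 1)
    (hk : KerLow b s k c0) {φ : ℝ → E3 → ℝ}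
    (h : PhiSol b φ) {t1 T δ : ℝ} (ht1 : 0 < t1) (htT : t1 < T) (hδ : 0 < δ)
    (hnd : ∀ τ, t1 ≤ τ → τ ≤ T → ∀ ξ : E3, ‖ξ‖ ≤ 1 → δ * ‖ξ‖ ^ 2 ≤ 1 - φ τ ξ) :
    ∃ a > 0, ∀ ξ : E3, φ T ξ ≤ Real.exp (-(a * ((1 + ‖ξ‖ ^ 2) ^ s - 1))) := by
  obtain ⟨hk0, hc00, hc01, hklow⟩ := id hk
  set p0 := (1 - c0) / 2 with hp0
  have hp0pos : 0 < p0 := by linarith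
  have hp0lt : p0 < 1/2 := by linarith
  set A0 := 1 - Real.exp (-(δ * p0 / 256)) with hA0
  have hA0pos : 0 < A0 := by
    rw [hA0, sub_pos, Real.exp_lt_one_iff]; have : 0 < δ * p0 := by positivity
    linarith
  set c₂ := 3 / 256 * k * p0 ^ (-s) * A0 with hc₂
  have hc₂pos : 0 < c₂ := by
    have := Real.rpow_pos_of_pos hp0pos (-s)
    positivity
  have hTt : 0 < T - t1 := by linarith
  set c₁ := min (δ / (2 * (T - t1))) (c₂ / 2) with hc₁
  have hc₁pos : 0 < c₁ := lt_min (by positivity) (by positivity)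
  have hc₁2 : c₁ < c₂ := (min_le_right _ _).trans_lt (by linarith)
  have hc₁δ : c₁ * (T - t1) ≤ δ / 2 := by
    have := min_le_left (δ / (2 * (T - t1))) (c₂ / 2)
    calc c₁ * (T - t1) ≤ δ / (2 * (T - t1)) * (T - t1) := by gcongr
      _ = δ / 2 := by field_simp
  set w : ℝ → ℝ := fun y => (1 + y) ^ s - 1 with hw
  have hw0 : ∀ y, 0 ≤ y → 0 ≤ w y := by
    intro y hy
    have : (1:ℝ) ≤ (1 + y) ^ s := Real.one_le_rpow (by linarith) hs0.le
    simp only [hw]; linarith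
  have hwle : ∀ y, 0 ≤ y → w y ≤ y := by
    intro y hy
    have := rpow_one_add_le_one_add_mul_self (by linarith : -1 ≤ y) hs0.le hs1
    simp only [hw]
    nlinarith
  have hwsub : ∀ x z, 0 ≤ x → 0 ≤ z → w (x + z) ≤ w x + w z := fun x z hx hz => w_subadd hs0.le hs1 hx hz
  have hwpow : ∀ y, 0 ≤ y → w y ≤ y ^ s := by
    intro y hy
    have := Real.rpow_add_le_add_rpow (a := 1) (b := y) zero_le_one hy hs0.le hs1
    simp only [hw]
    rw [Real.one_rpow] at this; linarith
  refine ⟨c₁ * (T - t1), by positivity, ?_⟩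
  set g : ℝ → ℝ → ℝ := fun t y => Real.exp (-(c₁ * (t - t1) * w y)) with hg
  have hgpos : ∀ t y, 0 < g t y := fun t y => Real.exp_pos _
  have hgle : ∀ t y, t1 ≤ t → 0 ≤ y → g t y ≤ 1 := by
    intro t y ht hy
    simp only [hg]
    rw [Real.exp_le_one_iff]
    have := hw0 y hy
    have : 0 ≤ c₁ * (t - t1) * w y := mul_nonneg (mul_nonneg hc₁pos.le (by linarith)) this
    linarith
  have hfδ : ∀ t y, t1 ≤ t → t ≤ T → 0 ≤ y → c₁ * (t - t1) * w y ≤ δ / 2 * y := by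
    intro t y h1 h2 hy
    have h3 : c₁ * (t - t1) ≤ δ / 2 := le_trans (by gcongr) hc₁δ
    have := hw0 y hy
    calc c₁ * (t - t1) * w y ≤ δ / 2 * w y := by gcongr
      _ ≤ δ / 2 * y := by gcongr; exact hwle y hy
  have hsmall : ∀ t, t1 ≤ t → t ≤ T → ∀ η : E3, ‖η‖ ≤ 1 → φ t η ≤ Real.exp (-(δ * ‖η‖ ^ 2)) := by
    intro t h1 h2 η hη
    have := hnd t h1 h2 η hη
    have h3 := Real.add_one_le_exp (-(δ * ‖η‖ ^ 2))
    linarith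
  have hsmall' : ∀ t, t1 ≤ t → t ≤ T → ∀ η : E3, ‖η‖ ≤ 1 → φ t η ≤ g t (‖η‖ ^ 2) := by
    intro t h1 h2 η hη
    refine (hsmall t h1 h2 η hη).trans (Real.exp_le_exp.2 ?_)
    have := hfδ t (‖η‖ ^ 2) h1 h2 (by positivity)
    have h4 : 0 ≤ δ * ‖η‖ ^ 2 := by positivity
    linarith
  -- main claim for each ε
  have main : ∀ ε : ℝ, 0 < ε → ε < 1 → ∀ t, t1 ≤ t → t ≤ T → ∀ η : E3, φ t η ≤ g t (‖η‖ ^ 2) + ε * ‖η‖ ^ 2 := by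
    intro ε hε hε1
    set u : ℝ → E3 → ℝ := fun t ξ => φ t ξ - g t (‖ξ‖ ^ 2) - ε * ‖ξ‖ ^ 2 with hu
    set C : Set E3 := closedBall 0 (√(1/ε)) \ ball 0 1 with hC
    have hCc : IsCompact C := (isCompact_closedBall _ _).diff isOpen_ball
    have hCmem : ∀ ξ ∈ C, 1 ≤ ‖ξ‖ ∧ ‖ξ‖ ≤ √(1/ε) := by
      intro ξ hξ
      have h1 := hξ.1
      have h2 := hξ.2
      simp only [mem_closedBall, dist_zero_right, mem_ball, not_lt] at h1 h2
      exact ⟨h2, h1⟩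
    have hout : ∀ t, t1 ≤ t → t ≤ T → (∀ η ∈ C, u t η ≤ 0) →
        ∀ η : E3, φ t η ≤ g t (‖η‖ ^ 2) + ε * ‖η‖ ^ 2 := by
      intro t h1 h2 hall η
      by_cases hn1 : ‖η‖ ≤ 1
      · have := hsmall' t h1 h2 η hn1
        have h4 : 0 ≤ ε * ‖η‖ ^ 2 := by positivity
        linarith
      · push Not at hn1
        by_cases hn2 : ‖η‖ ≤ √(1/ε)
        · have := hall η ⟨by simpa using hn2, by simpa using hn1.le⟩
          simp only [hu] at this
          linarith
        · push Not at hn2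
          have h5 : 1 / ε ≤ ‖η‖ ^ 2 := by
            rw [← Real.sq_sqrt (show 0 ≤ 1 / ε by positivity)]
            gcongr
          have h6 : 1 ≤ ε * ‖η‖ ^ 2 := by
            rw [div_le_iff₀ hε] at h5; linarith
          have := (h.isPhi t (by linarith)).le_one η
          have := hgpos t (‖η‖ ^ 2)
          linarith
    have hneg : ∀ t, t1 ≤ t → t ≤ T → ∀ ξ ∈ C, u t ξ < 0 := by
      apply first_touch hCc u
      · have h1 : ContinuousOn (fun p : ℝ × E3 => φ p.1 p.2) (Icc t1 T ×ˢ C) :=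
          h.cont.mono (fun p hp => ⟨by have := hp.1.1; simp only [mem_Ici]; linarith, mem_univ _⟩)
        have h2 : Continuous (fun p : ℝ × E3 => g p.1 (‖p.2‖ ^ 2) + ε * ‖p.2‖ ^ 2) := by
          simp only [hg, hw]
          have : Continuous fun p : ℝ × E3 => (1 + ‖p.2‖ ^ 2) ^ s :=
            Continuous.rpow_const (by fun_prop) (fun p => Or.inr hs0.le)
          fun_prop
        refine (h1.sub h2.continuousOn).congr ?_
        intro p _
        simp only [hu, Pi.sub_apply]; ring
      · intro ξ hξ
        have h1 := (hCmem ξ hξ).1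
        simp only [hu, hg]
        have := (h.isPhi t1 ht1.le).le_one ξ
        simp only [sub_self, mul_zero, zero_mul, neg_zero, Real.exp_zero]
        have : 0 < ε * ‖ξ‖ ^ 2 := by positivity
        linarith
      · intro t ht htT' ξ hξ hall hz
        have ht0 : 0 < t := by linarith
        have hP := h.isPhi t ht0.le
        have hφ := hout t ht.le htT' hall
        obtain ⟨hn1, hn2⟩ := hCmem ξ hξ
        have hξ0 : ξ ≠ 0 := by
          rintro rfl
          simp at hn1; linarith
        set y := ‖ξ‖ ^ 2 with hy
        have hy1 : 1 ≤ y := by rw [hy]; nlinarith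
        have hz' : φ t ξ = g t y + ε * y := by simp only [hu] at hz; linarith
        obtain ⟨d, hd, hdle⟩ := h.hasDeriv ht0 ξ
        have hgd : HasDerivAt (fun τ => g τ y) (-(c₁ * w y) * g t y) t := by
          have h1 : HasDerivAt (fun τ => -(c₁ * (τ - t1) * w y)) (-(c₁ * w y)) t := by
            have := ((((hasDerivAt_id t).sub_const t1).const_mul c₁).mul_const (w y)).neg
            exact this.congr_deriv (by simp)
          have := h1.exp
          rw [mul_comm] at this
          exact this
        refine ⟨d - -(c₁ * w y) * g t y, ?_, ?_⟩
        swap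
        · simp only [hu]
          exact (hd.sub hgd).sub_const _
        -- pointwise bounds
        have hnn : ∀ σ : sphere (0:E3) 1, 0 ≤ ‖xiPlus ξ σ‖ ^ 2 ∧ 0 ≤ ‖xiMinus ξ σ‖ ^ 2 ∧
            ‖xiPlus ξ σ‖ ^ 2 + ‖xiMinus ξ σ‖ ^ 2 = y := by
          intro σ
          refine ⟨by positivity, by positivity, ?_⟩
          rw [norm_sq_xiPlus, norm_sq_xiMinus]; ring
        have hgen : ∀ σ : sphere (0:E3) 1, φ t (xiPlus ξ σ) * φ t (xiMinus ξ σ) ≤ φ t ξ := by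
          intro σ
          obtain ⟨p1, p2, p3⟩ := hnn σ
          set yp := ‖xiPlus ξ σ‖ ^ 2
          set ym := ‖xiMinus ξ σ‖ ^ 2
          have h1 := hφ (xiPlus ξ σ)
          have h2 := hφ (xiMinus ξ σ)
          have h3 : g t yp * g t ym ≤ g t y := by
            simp only [hg]
            rw [← Real.exp_add]
            apply Real.exp_le_exp.2
            have := hwsub yp ym p1 p2
            rw [p3] at this
            have := mul_le_mul_of_nonneg_left this (show 0 ≤ c₁ * (t - t1) by apply mul_nonneg hc₁pos.le; linarith)
            linarith
          have m0 := hP.1 (xiMinus ξ σ)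
          have m1 := hP.le_one (xiMinus ξ σ)
          have g1 := hgle t yp ht.le p1
          have g0 := hgpos t yp
          have s1 : φ t (xiPlus ξ σ) * φ t (xiMinus ξ σ) ≤ g t yp * φ t (xiMinus ξ σ) + ε * yp := by
            have q1 : 0 ≤ ε * yp := mul_nonneg hε.le p1
            have q2 := mul_le_mul_of_nonneg_right h1 m0
            have q3 := mul_le_mul_of_nonneg_left m1 q1
            rw [add_mul] at q2
            linarith only [q1, q2, q3]
          have s2 : g t yp * φ t (xiMinus ξ σ) ≤ g t yp * g t ym + ε * ym := by
            have q1 : 0 ≤ ε * ym := mul_nonneg hε.le p2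
            have q2 := mul_le_mul_of_nonneg_left h2 g0.le
            have q3 := mul_le_mul_of_nonneg_right g1 q1
            rw [mul_add] at q2
            linarith only [q1, q2, q3]
          rw [hz', ← p3]
          rw [← p3] at h3
          linarith
        have hspec : ∀ σ : sphere (0:E3) 1, p0 / 128 ≤ ‖xiMinus ξ σ‖ ^ 2 → ‖xiMinus ξ σ‖ ^ 2 ≤ 1 →
            φ t (xiPlus ξ σ) * φ t (xiMinus ξ σ) - φ t ξ ≤ - (A0 * g t y) := by
          intro σ hlo hhi
          obtain ⟨p1, p2, p3⟩ := hnn σ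
          have h2 := hsmall t ht.le htT' (xiMinus ξ σ) (by nlinarith [norm_nonneg (xiMinus ξ σ)])
          have h1 := hφ (xiPlus ξ σ)
          set yp := ‖xiPlus ξ σ‖ ^ 2
          set ym := ‖xiMinus ξ σ‖ ^ 2
          have h3 : g t yp * Real.exp (-(δ * ym)) ≤ g t y * Real.exp (-(δ * p0 / 256)) := by
            simp only [hg]
            rw [← Real.exp_add, ← Real.exp_add]
            apply Real.exp_le_exp.2
            have := hwsub yp ym p1 p2
            rw [p3] at this
            have := mul_le_mul_of_nonneg_left this (show 0 ≤ c₁ * (t - t1) by apply mul_nonneg hc₁pos.le; linarith)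
            have h5 := hfδ t ym ht.le htT' p2
            have h6 : δ * (p0 / 128) ≤ δ * ym := by gcongr
            linarith
          have m0 := hP.1 (xiMinus ξ σ)
          have m1 := hP.le_one (xiMinus ξ σ)
          have g0 := hgpos t yp
          have s1 : φ t (xiPlus ξ σ) * φ t (xiMinus ξ σ) ≤ g t yp * φ t (xiMinus ξ σ) + ε * yp := by
            have q1 : 0 ≤ ε * yp := mul_nonneg hε.le p1
            have q2 := mul_le_mul_of_nonneg_right h1 m0
            have q3 := mul_le_mul_of_nonneg_left m1 q1
            rw [add_mul] at q2
            linarith only [q1, q2, q3]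
          have s2 : g t yp * φ t (xiMinus ξ σ) ≤ g t yp * Real.exp (-(δ * ym)) := by gcongr
          rw [hz', hA0, ← p3]
          rw [← p3] at h3
          have : 0 ≤ ε * ym := by positivity
          linarith
        set a := p0 / y with ha
        have hapos : 0 < a := by positivity
        have ha1 : a ≤ p0 := div_le_self hp0pos.le hy1
        have hay : a * y = p0 := by rw [ha]; field_simp
        set S := {σ : sphere (0:E3) 1 | a / 64 ≤ 1 - ⟪ξ, (σ : E3)⟫ / ‖ξ‖ ∧ 1 - ⟪ξ, (σ : E3)⟫ / ‖ξ‖ ≤ a} with hS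
        have hSm : MeasurableSet S := by
          have hc : Continuous fun σ : sphere (0:E3) 1 => 1 - ⟪ξ, (σ : E3)⟫ / ‖ξ‖ := by fun_prop
          exact ((isClosed_le continuous_const hc).inter (isClosed_le hc continuous_const)).measurableSet
        have hband := band a hapos (by linarith) ξ hξ0
        rw [← hS] at hband
        set A := k * a ^ (-(1 + s)) * (A0 * g t y) with hA
        have hApos : 0 < A := by
          have := Real.rpow_pos_of_pos hapos (-(1 + s))
          have := hgpos t y
          positivity
        have hpt : ∀ σ, qInt b (φ t) ξ σ ≤ S.indicator (fun _ => -A) σ := by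
          intro σ
          by_cases hσ : σ ∈ S
          · rw [indicator_of_mem hσ]
            unfold qInt
            obtain ⟨l1, l2⟩ := hσ
            have hym := norm_sq_xiMinus ξ σ
            have hbl := hklow (⟪ξ, (σ : E3)⟫ / ‖ξ‖) (by linarith) (by linarith)
            set c := ⟪ξ, (σ : E3)⟫ / ‖ξ‖
            have hym1 : p0 / 128 ≤ ‖xiMinus ξ σ‖ ^ 2 := by
              rw [hym, ← hay]
              nlinarith
            have hym2 : ‖xiMinus ξ σ‖ ^ 2 ≤ 1 := by
              rw [hym]
              nlinarith
            have h1 := hspec σ hym1 hym2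
            have h2 : k * a ^ (-(1 + s)) ≤ b c := by
              refine le_trans ?_ hbl
              refine mul_le_mul_of_nonneg_left ?_ hk0.le
              apply Real.rpow_le_rpow_of_nonpos (by linarith) l2 (by linarith)
            have h3 : 0 ≤ A0 * g t y := mul_nonneg hA0pos.le (hgpos t y).le
            have h4 := hb c
            calc b c * (φ t (xiPlus ξ σ) * φ t (xiMinus ξ σ) - φ t ξ) ≤ b c * (-(A0 * g t y)) := by gcongr
              _ ≤ -A := by rw [hA]; nlinarith
          · rw [indicator_of_notMem hσ]
            unfold qInt
            exact mul_nonpos_of_nonneg_of_nonpos (hb _) (sub_nonpos.2 (hgen σ))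
        have hintg : ∫ σ, qInt b (φ t) ξ σ ∂sphμ ≤ -(A * (3 * a / 256)) := by
          calc ∫ σ, qInt b (φ t) ξ σ ∂sphμ ≤ ∫ σ, S.indicator (fun _ => -A) σ ∂sphμ :=
                integral_mono (h.integrable t ht0.le ξ) ((integrable_const _).indicator hSm) hpt
            _ = sphμ.real S * (-A) := by
                rw [integral_indicator hSm, setIntegral_const, smul_eq_mul]
            _ ≤ -(A * (3 * a / 256)) := by nlinarith
        have hAa : A * (3 * a / 256) = c₂ * y ^ s * g t y := by
          have e1 : a ^ (-(1 + s)) * a = a ^ (-s) := by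
            rw [← Real.rpow_add_one hapos.ne']; congr 1; ring
          have e2 : a ^ (-s) = p0 ^ (-s) * y ^ s := by
            rw [ha, Real.div_rpow hp0pos.le (by linarith), Real.rpow_neg (by linarith : 0 ≤ y), div_inv_eq_mul]
          calc A * (3 * a / 256) = 3 / 256 * k * (a ^ (-(1 + s)) * a) * A0 * g t y := by rw [hA]; ring
            _ = _ := by rw [e1, e2, hc₂]; ring
        rw [hAa] at hintg
        have hys : 0 < y ^ s := Real.rpow_pos_of_pos (by linarith) s
        have hw1 := hwpow y (by linarith)
        have h9 : c₁ * w y < c₂ * y ^ s := by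
          calc c₁ * w y ≤ c₁ * y ^ s := by gcongr
            _ < c₂ * y ^ s := by gcongr
        have := mul_lt_mul_of_pos_right h9 (hgpos t y)
        linarith
    intro t h1 h2
    exact hout t h1 h2 (fun η hη => (hneg t h1 h2 η hη).le)
  intro ξ
  have hlim : Tendsto (fun ε : ℝ => g T (‖ξ‖ ^ 2) + ε * ‖ξ‖ ^ 2) (𝓝[>] 0) (𝓝 (g T (‖ξ‖ ^ 2) + 0 * ‖ξ‖ ^ 2)) := by
    apply Tendsto.mono_left _ nhdsWithin_le_nhds
    exact (Continuous.tendsto (by fun_prop) 0)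
  have := ge_of_tendsto hlim (b := φ T ξ) (by
    filter_upwards [Ioo_mem_nhdsGT (one_pos : (0:ℝ) < 1)] with ε hε
    exact main ε hε.1 hε.2 T htT.le le_rfl ξ)
  simpa [hg, hw] using this

lemma eta_small {G : ℝ → ℝ} (hGm : Measurable G) (hG1 : G 1 = 0) (hG2 : G (-1) = 0) {e : E3}
    (hI : Integrable (fun σ : sphere (0:E3) 1 => G (⟪e, (σ : E3)⟫ / ‖e‖)) sphμ) {ε : ℝ} (hε : 0 < ε) :
    ∃ l > 0, ∫ σ : sphere (0:E3) 1, (Set.indicator {c : ℝ | 1 - c ^ 2 < l} G) (⟪e, (σ : E3)⟫ / ‖e‖) ∂sphμ < ε := by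
  have hms : ∀ l : ℝ, MeasurableSet {c : ℝ | 1 - c ^ 2 < l} := fun l =>
    (isOpen_lt (by fun_prop) continuous_const).measurableSet
  have hmc : Measurable (fun σ : sphere (0:E3) 1 => ⟪e, (σ : E3)⟫ / ‖e‖) :=
    Continuous.measurable (by fun_prop)
  have key : Tendsto (fun n : ℕ => ∫ σ : sphere (0:E3) 1,
      (Set.indicator {c : ℝ | 1 - c ^ 2 < 1 / ((n:ℝ) + 1)} G) (⟪e, (σ : E3)⟫ / ‖e‖) ∂sphμ) atTop
      (𝓝 (∫ σ : sphere (0:E3) 1, (0:ℝ) ∂sphμ)) := by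
    refine tendsto_integral_of_dominated_convergence (fun σ : sphere (0:E3) 1 => |G (⟪e, (σ : E3)⟫ / ‖e‖)|)
      (fun n => ((hGm.indicator (hms _)).comp hmc).aestronglyMeasurable) hI.abs ?_ ?_
    · intro n
      refine ae_of_all _ fun σ => ?_
      rw [Real.norm_eq_abs]
      unfold indicator
      split_ifs
      · exact le_rfl
      · simp
    · refine ae_of_all _ fun σ => ?_
      have hc := cos_mem e σ
      set c := ⟪e, (σ : E3)⟫ / ‖e‖
      rw [abs_le] at hc
      rcases eq_or_lt_of_le (show 0 ≤ 1 - c ^ 2 by nlinarith) with h0 | h0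
      · have : G c = 0 := by
          rcases mul_eq_zero.1 (show (1 - c) * (1 + c) = 0 by linarith) with h | h
          · rw [show c = 1 by linarith, hG1]
          · rw [show c = -1 by linarith, hG2]
        refine Tendsto.congr (f₁ := fun _ => (0:ℝ)) ?_ tendsto_const_nhds
        intro n
        unfold indicator
        rw [this]; simp
      · refine tendsto_const_nhds.congr' ?_
        filter_upwards [(tendsto_one_div_add_atTop_nhds_zero_nat (𝕜 := ℝ)).eventually (gt_mem_nhds h0)] with n hn
        rw [indicator_of_notMem]
        simp only [Set.mem_ofPred_eq, not_lt]
        exact hn.le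
  rw [integral_zero] at key
  obtain ⟨n, hn⟩ := (key.eventually (gt_mem_nhds hε)).exists
  exact ⟨1 / ((n:ℝ) + 1), by positivity, hn⟩

/-- pointwise bound used at a touching point -/
lemma mp1_pt {κ κ0 a y yp ym P Q F : ℝ} (hκ0 : 0 ≤ κ) (hκ : κ ≤ κ0) (hy : 0 < y) (hyp : 0 ≤ yp) (hym : 0 ≤ ym)
    (hsum : yp + ym = y) (ha : 0 ≤ a) (ha1 : a ≤ 1)
    (hP0 : 0 ≤ P) (hQ0 : 0 ≤ Q) (hP1 : P ≤ 1) (hQ1 : Q ≤ 1)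
    (hP : P ≤ Real.exp (-(κ * yp - a))) (hQ : Q ≤ Real.exp (-(κ * ym - a)))
    (hF : F = Real.exp (-(κ * y - a))) :
    P * Q - F ≤ 2 * F * min a (κ0 * (2 * yp * ym / y)) := by
  have hFpos : 0 < F := hF ▸ Real.exp_pos _
  have key : ∀ z, 0 ≤ z → z ≤ 1 → P * Q ≤ F * Real.exp z → P * Q - F ≤ 2 * F * z := by
    intro z hz hz1 hle
    have h1 : Real.exp z ≤ 1 + 2 * z := by
      have := Real.abs_exp_sub_one_sub_id_le (x := z) (by rw [abs_of_nonneg hz]; exact hz1)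
      have := (abs_le.1 this).2
      nlinarith
    have := mul_le_mul_of_nonneg_left h1 hFpos.le
    linarith
  have b1 : P * Q ≤ F * Real.exp a := by
    calc P * Q ≤ Real.exp (-(κ * yp - a)) * Real.exp (-(κ * ym - a)) := by gcongr
      _ = F * Real.exp a := by
        rw [hF, ← Real.exp_add, ← Real.exp_add]; congr 1; rw [← hsum]; ring
  have b2 : P * Q ≤ F * Real.exp (κ * ym) := by
    calc P * Q ≤ Real.exp (-(κ * yp - a)) * 1 := by gcongr
      _ = F * Real.exp (κ * ym) := by
        rw [hF, mul_one, ← Real.exp_add]; congr 1; rw [← hsum]; ring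
  have b3 : P * Q ≤ F * Real.exp (κ * yp) := by
    calc P * Q ≤ 1 * Real.exp (-(κ * ym - a)) := by gcongr
      _ = F * Real.exp (κ * yp) := by
        rw [hF, one_mul, ← Real.exp_add]; congr 1; rw [← hsum]; ring
  have h2 : κ * min yp ym ≤ κ0 * (2 * yp * ym / y) := by
    have : min yp ym ≤ 2 * yp * ym / y := by
      rw [le_div_iff₀ hy, ← hsum]
      rcases le_total yp ym with h | h
      · rw [min_eq_left h]; nlinarith
      · rw [min_eq_right h]; nlinarith
    have h0 : 0 ≤ min yp ym := le_min hyp hym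
    gcongr
    exact hκ0.trans hκ
  have b4 : P * Q ≤ F * Real.exp (κ * min yp ym) := by
    rcases le_total yp ym with h | h
    · rw [min_eq_left h]; exact b3
    · rw [min_eq_right h]; exact b2
  have b5 : P * Q ≤ F * Real.exp (min a (κ0 * (2 * yp * ym / y))) := by
    rcases le_total a (κ0 * (2 * yp * ym / y)) with h | h
    · rw [min_eq_left h]; exact b1
    · rw [min_eq_right h]
      refine b4.trans ?_
      gcongr
  have h3 : 0 ≤ κ0 * (2 * yp * ym / y) := by
    have := hκ0.trans hκ
    positivity
  exact key _ (le_min ha h3) ((min_le_left _ _).trans ha1) b5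

set_option maxHeartbeats 2000000 in
lemma mp1 {b : ℝ → ℝ} (hbm : Measurable b) (hb : ∀ x, 0 ≤ b x) {φ : ℝ → E3 → ℝ}
    (h : PhiSol b φ) {τ T κ0 : ℝ} (hτ : 0 < τ) (hτT : τ < T) (hκ0 : 0 < κ0)
    (h0 : ∀ ξ : E3, ‖ξ‖ ≤ 1 → κ0 * ‖ξ‖ ^ 2 ≤ 1 - φ τ ξ) {e : E3} (he : e ≠ 0) (he1 : ‖e‖ = 1 / 2)
    (hI : Integrable (fun σ : sphere (0:E3) 1 => (fun c => b c * (1 - c ^ 2)) (⟪e, (σ : E3)⟫ / ‖e‖)) sphμ) :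
    φ T e < 1 := by
  set G : ℝ → ℝ := fun c => b c * (1 - c ^ 2) with hG
  have hGm : Measurable G := by fun_prop
  have hTτ : 0 < T - τ := by linarith
  obtain ⟨l, hl, hη⟩ := eta_small hGm (by simp [hG]) (by simp [hG]) hI
    (show 0 < 1 / (2 * (T - τ)) by positivity)
  set G' := Set.indicator {c : ℝ | 1 - c ^ 2 < l} G with hG'
  have hG'm : Measurable G' := hGm.indicator (isOpen_lt (by fun_prop) continuous_const).measurableSet
  set η := ∫ σ : sphere (0:E3) 1, G' (⟪e, (σ : E3)⟫ / ‖e‖) ∂sphμ with hηdef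
  set B := ∫ σ : sphere (0:E3) 1, G (⟪e, (σ : E3)⟫ / ‖e‖) ∂sphμ with hBdef
  set Cc := 2 * B / l with hCc
  set A := min 1 (κ0 / 16) with hA
  have hApos : 0 < A := lt_min one_pos (by positivity)
  have hB0 : 0 ≤ B := by
    apply integral_nonneg
    intro σ
    have := cos_mem e σ
    rw [← sq_le_one_iff_abs_le_one] at this
    exact mul_nonneg (hb _) (by linarith)
  have hC0 : 0 ≤ Cc := by positivity
  set κ : ℝ → ℝ := fun t => κ0 - κ0 * (t - τ) / (2 * (T - τ)) with hκ
  set a : ℝ → ℝ := fun t => A * Real.exp (Cc * (t - T)) with ha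
  have hκ1 : ∀ t, τ ≤ t → κ t ≤ κ0 := by
    intro t ht
    simp only [hκ]
    have : 0 ≤ κ0 * (t - τ) / (2 * (T - τ)) := by
      apply div_nonneg (mul_nonneg hκ0.le (by linarith)) (by linarith)
    linarith
  have hκ2 : ∀ t, t ≤ T → κ0 / 2 ≤ κ t := by
    intro t ht
    simp only [hκ]
    have : κ0 * (t - τ) / (2 * (T - τ)) ≤ κ0 / 2 := by
      rw [div_le_div_iff₀ (by linarith) (by norm_num)]
      nlinarith
    linarith
  have ha0 : ∀ t, 0 < a t := fun t => mul_pos hApos (Real.exp_pos _)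
  have haA : ∀ t, t ≤ T → a t ≤ A := by
    intro t ht
    simp only [ha]
    have : Real.exp (Cc * (t - T)) ≤ 1 := by
      rw [Real.exp_le_one_iff]; exact mul_nonpos_of_nonneg_of_nonpos hC0 (by linarith)
    nlinarith
  set g : ℝ → ℝ → ℝ := fun t y => Real.exp (-(κ t * y - a t)) with hg
  set u : ℝ → E3 → ℝ := fun t ξ => φ t ξ - g t (‖ξ‖ ^ 2) with hu
  have main : ∀ t, τ ≤ t → t ≤ T → ∀ ξ ∈ closedBall (0:E3) 1, u t ξ < 0 := by
    apply first_touch (isCompact_closedBall _ _) u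
    · have h1 : ContinuousOn (fun p : ℝ × E3 => φ p.1 p.2) (Icc τ T ×ˢ closedBall (0:E3) 1) :=
        h.cont.mono (fun p hp => ⟨by have := hp.1.1; simp only [mem_Ici]; linarith, mem_univ _⟩)
      have h2 : Continuous (fun p : ℝ × E3 => g p.1 (‖p.2‖ ^ 2)) := by
        simp only [hg, hκ, ha]
        fun_prop
      exact h1.sub h2.continuousOn
    · intro ξ hξ
      have h1 := h0 ξ (by simpa using hξ)
      simp only [hu, hg]
      have h2 : κ τ = κ0 := by simp [hκ]
      have h3 := Real.add_one_le_exp (-(κ τ * ‖ξ‖ ^ 2))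
      have h4 : Real.exp (-(κ τ * ‖ξ‖ ^ 2)) < Real.exp (-(κ τ * ‖ξ‖ ^ 2 - a τ)) := by
        apply Real.exp_lt_exp.2; linarith [ha0 τ]
      rw [h2] at h3 h4 ⊢
      linarith
    · intro t ht htT ξ hξ hall hz
      have ht0 : 0 < t := by linarith
      have hP := h.isPhi t ht0.le
      have hξn : ‖ξ‖ ≤ 1 := by simpa using hξ
      have hz' : φ t ξ = g t (‖ξ‖ ^ 2) := by simp only [hu] at hz; linarith
      have hξ0 : ξ ≠ 0 := by
        rintro rfl
        have h1 := hP.le_one 0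
        rw [hz'] at h1
        simp only [hg] at h1
        rw [Real.exp_le_one_iff] at h1
        have := ha0 t
        simp at h1; linarith
      have hn : 0 < ‖ξ‖ := norm_pos_iff.2 hξ0
      set y := ‖ξ‖ ^ 2 with hy
      have hypos : 0 < y := by positivity
      have hy1 : y ≤ 1 := by rw [hy]; nlinarith
      obtain ⟨d, hd, hdle⟩ := h.hasDeriv ht0 ξ
      have hgd : HasDerivAt (fun τ' => g τ' y) ((κ0 / (2 * (T - τ)) * y + Cc * a t) * g t y) t := by
        have h1 : HasDerivAt κ (-(κ0 / (2 * (T - τ)))) t := by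
          have := ((((hasDerivAt_id t).sub_const τ).const_mul κ0).div_const (2 * (T - τ))).const_sub κ0
          exact this.congr_deriv (by simp)
        have h2 : HasDerivAt a (Cc * a t) t := by
          have := ((((hasDerivAt_id t).sub_const T).const_mul Cc).exp).const_mul A
          exact this.congr_deriv (by simp [ha]; ring)
        have := (((h1.mul_const y).sub h2).neg).exp
        refine this.congr_deriv ?_
        simp only [hg, Pi.sub_apply, Pi.neg_apply]
        ring
      refine ⟨d - (κ0 / (2 * (T - τ)) * y + Cc * a t) * g t y, ?_, ?_⟩
      swap
      · exact hd.sub hgd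
      have hGξ : Integrable (fun σ : sphere (0:E3) 1 => G (⟪ξ, (σ : E3)⟫ / ‖ξ‖)) sphμ := zonal_int G ξ e hξ0 he hI
      have hG'ξ : Integrable (fun σ : sphere (0:E3) 1 => G' (⟪ξ, (σ : E3)⟫ / ‖ξ‖)) sphμ := by
        refine hGξ.mono ?_ (ae_of_all _ fun σ => ?_)
        · exact (hG'm.comp (Continuous.measurable (by fun_prop))).aestronglyMeasurable
        · rw [hG']; exact norm_indicator_le_norm_self _ _
      have hpt : ∀ σ, qInt b (φ t) ξ σ ≤ (2 * g t y) * ((κ0 * y / 2) * G' (⟪ξ, (σ : E3)⟫ / ‖ξ‖) +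
          (a t / l) * G (⟪ξ, (σ : E3)⟫ / ‖ξ‖)) := by
        intro σ
        have hc := cos_mem ξ σ
        have e1 := norm_sq_xiPlus ξ σ
        have e2 := norm_sq_xiMinus ξ σ
        unfold qInt
        set c := ⟪ξ, (σ : E3)⟫ / ‖ξ‖ with hcdef
        rw [← sq_le_one_iff_abs_le_one] at hc
        have hc' := abs_le_of_sq_le_sq' (a := c) (b := 1) (by linarith) zero_le_one
        have hball : ∀ x : E3, ‖x‖ ^ 2 ≤ y → φ t x ≤ g t (‖x‖ ^ 2) := by
          intro x hx
          have : ‖x‖ ≤ 1 := by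
            by_contra! hcon
            nlinarith
          have := hall x (by simpa using this)
          simp only [hu] at this; linarith
        have l1 := mp1_pt (κ := κ t) (κ0 := κ0) (a := a t) (y := y) (yp := ‖xiPlus ξ σ‖ ^ 2) (ym := ‖xiMinus ξ σ‖ ^ 2)
          (P := φ t (xiPlus ξ σ)) (Q := φ t (xiMinus ξ σ)) (F := φ t ξ) (by linarith [hκ2 t htT]) (hκ1 t ht.le) hypos
          (by positivity) (by positivity) (by rw [e1, e2]; ring) (ha0 t).le ((haA t htT).trans (min_le_left _ _))
          (hP.1 _) (hP.1 _) (hP.le_one _) (hP.le_one _) (hball _ (by rw [e1]; nlinarith)) (hball _ (by rw [e2]; nlinarith)) hz'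
        have e3 : 2 * ‖xiPlus ξ σ‖ ^ 2 * ‖xiMinus ξ σ‖ ^ 2 / y = y / 2 * (1 - c ^ 2) := by
          rw [e1, e2, ← hy]; field_simp; ring
        rw [e3, hz'] at l1
        have hg0 : 0 < g t y := Real.exp_pos _
        have l2 : b c * min (a t) (κ0 * (y / 2 * (1 - c ^ 2))) ≤ (κ0 * y / 2) * G' c + (a t / l) * G c := by
          have hGc : 0 ≤ G c := mul_nonneg (hb _) (by linarith)
          have hal : 0 ≤ a t / l := div_nonneg (ha0 t).le hl.le
          by_cases hcl : 1 - c ^ 2 < l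
          · have : G' c = G c := indicator_of_mem (s := {c : ℝ | 1 - c ^ 2 < l}) hcl _
            rw [this]
            have h1 := mul_le_mul_of_nonneg_left (min_le_right (a t) (κ0 * (y / 2 * (1 - c ^ 2)))) (hb c)
            have h2 : b c * (κ0 * (y / 2 * (1 - c ^ 2))) = (κ0 * y / 2) * G c := by simp only [hG]; ring
            have h3 := mul_nonneg hal hGc
            linarith
          · have : G' c = 0 := indicator_of_notMem (s := {c : ℝ | 1 - c ^ 2 < l}) hcl _
            rw [this]
            have h1 := mul_le_mul_of_nonneg_left (min_le_left (a t) (κ0 * (y / 2 * (1 - c ^ 2)))) (hb c)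
            have h2 : b c * a t ≤ (a t / l) * G c := by
              have : (a t / l) * G c = b c * a t * ((1 - c ^ 2) / l) := by simp only [hG]; ring
              rw [this]
              apply le_mul_of_one_le_right (mul_nonneg (hb c) (ha0 t).le)
              rw [le_div_iff₀ hl]
              linarith
            linarith
        rw [hz']
        calc b c * (φ t (xiPlus ξ σ) * φ t (xiMinus ξ σ) - g t y)
            ≤ b c * (2 * g t y * min (a t) (κ0 * (y / 2 * (1 - c ^ 2)))) := mul_le_mul_of_nonneg_left l1 (hb c)
          _ = (2 * g t y) * (b c * min (a t) (κ0 * (y / 2 * (1 - c ^ 2)))) := by ring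
          _ ≤ _ := by gcongr
      have hintg := integral_mono (h.integrable t ht0.le ξ)
        (((hG'ξ.const_mul (κ0 * y / 2)).add (hGξ.const_mul (a t / l))).const_mul (2 * g t y)) hpt
      have hval : ∫ σ : sphere (0:E3) 1, (2 * g t y) * ((κ0 * y / 2) * G' (⟪ξ, (σ : E3)⟫ / ‖ξ‖) +
          (a t / l) * G (⟪ξ, (σ : E3)⟫ / ‖ξ‖)) ∂sphμ = (2 * g t y) * ((κ0 * y / 2) * η + (a t / l) * B) := by
        rw [integral_const_mul, integral_add (hG'ξ.const_mul _) (hGξ.const_mul _), integral_const_mul,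
          integral_const_mul, zonal_eq G' hG'm e ξ he hξ0, zonal_eq G hGm e ξ he hξ0]
      have hintg' : ∫ σ, qInt b (φ t) ξ σ ∂sphμ ≤ (2 * g t y) * ((κ0 * y / 2) * η + (a t / l) * B) := by
        rw [← hval]; exact hintg
      have hg0 : 0 < g t y := Real.exp_pos _
      have f1 : κ0 * y * η < κ0 * y * (1 / (2 * (T - τ))) := by gcongr
      have f2 : 2 * (a t / l * B) = Cc * a t := by rw [hCc]; ring
      have f3 : κ0 * y * (1 / (2 * (T - τ))) = κ0 / (2 * (T - τ)) * y := by ring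
      have f4 : (2 * g t y) * ((κ0 * y / 2) * η + (a t / l) * B) < (κ0 / (2 * (T - τ)) * y + Cc * a t) * g t y := by
        have : (2 * g t y) * ((κ0 * y / 2) * η + (a t / l) * B) = (κ0 * y * η + 2 * (a t / l * B)) * g t y := by ring
        rw [this, f2]
        apply mul_lt_mul_of_pos_right _ hg0
        linarith
      linarith
  have := main T hτT.le le_rfl e (by simp; linarith)
  simp only [hu, hg] at this
  have h2 : Real.exp (-(κ T * ‖e‖ ^ 2 - a T)) < 1 := by
    rw [Real.exp_lt_one_iff, he1]
    have := hκ2 T le_rfl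
    have h3 := (haA T le_rfl).trans (min_le_right _ _)
    nlinarith
  linarith

/-- quarter turn about the first axis -/
def quarter : E3 ≃ₗᵢ[ℝ] E3 where
  toFun x := !₂[x 0, -x 2, x 1]
  invFun x := !₂[x 0, x 2, -x 1]
  map_add' x y := by ext i; fin_cases i <;> simp; ring
  map_smul' c x := by ext i; fin_cases i <;> simp
  left_inv x := by ext i; fin_cases i <;> simp
  right_inv x := by ext i; fin_cases i <;> simp
  norm_map' x := by
    simp [EuclideanSpace.norm_eq, Fin.sum_univ_three]
    congr 1; ring

lemma inner3 (x y : E3) : ⟪x, y⟫ = x 0 * y 0 + x 1 * y 1 + x 2 * y 2 := by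
  simp [PiLp.inner_apply, Fin.sum_univ_three]; ring

lemma norm3 (x : E3) : ‖x‖ ^ 2 = x 0 ^ 2 + x 1 ^ 2 + x 2 ^ 2 := by
  rw [EuclideanSpace.norm_sq_eq]; simp [Fin.sum_univ_three]

lemma quarter_0 (x : E3) : quarter x 0 = x 0 := rfl
lemma quarter_1 (x : E3) : quarter x 1 = -x 2 := rfl
lemma quarter_2 (x : E3) : quarter x 2 = x 1 := rfl

lemma rot4 (e : E3) (he : ‖e‖ = 1) : ∃ R : E3 ≃ₗᵢ[ℝ] E3, R e = e ∧ ∀ u σ : E3, ‖σ‖ = 1 →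
    ⟪u, σ⟫ ^ 2 + ⟪u, R σ⟫ ^ 2 + ⟪u, R (R σ)⟫ ^ 2 + ⟪u, R (R (R σ))⟫ ^ 2
      = 4 * ⟪e, σ⟫ ^ 2 * ⟪u, e⟫ ^ 2 + 2 * (1 - ⟪e, σ⟫ ^ 2) * (‖u‖ ^ 2 - ⟪u, e⟫ ^ 2) := by
  set e0 : E3 := EuclideanSpace.single 0 1 with he0
  obtain ⟨Q, hQ⟩ := exists_rot e e0 he (by simp [he0])
  have hq0 : quarter e0 = e0 := by
    ext i; fin_cases i <;> simp [quarter_0, quarter_1, quarter_2, he0]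
  refine ⟨(Q.trans quarter).trans Q.symm, ?_, ?_⟩
  · simp [hQ, hq0]
    rw [← hQ]; simp
  · intro u σ hσ
    have e1 : ∀ x, ⟪u, Q.symm x⟫ = ⟪Q u, x⟫ := by
      intro x
      rw [← Q.inner_map_map]; simp
    have e2 : ⟪u, σ⟫ = ⟪Q u, Q σ⟫ := (Q.inner_map_map u σ).symm
    have e3 : ⟪e, σ⟫ = ⟪e0, Q σ⟫ := by rw [← hQ, Q.inner_map_map]
    have e4 : ⟪u, e⟫ = ⟪Q u, e0⟫ := by rw [← hQ, Q.inner_map_map]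
    have e5 : ‖u‖ ^ 2 = ‖Q u‖ ^ 2 := by simp
    have e6 : ‖Q σ‖ ^ 2 = 1 := by simp [hσ]
    simp only [LinearIsometryEquiv.trans_apply, LinearIsometryEquiv.apply_symm_apply, e1]
    rw [e2, e3, e4, e5]
    generalize Q u = v at *
    generalize Q σ = w at *
    rw [norm3] at e6
    simp only [inner3, quarter_0, quarter_1, quarter_2, norm3]
    have a0 : e0 0 = 1 := by simp [he0]
    have a1 : e0 1 = 0 := by simp [he0]
    have a2 : e0 2 = 0 := by simp [he0]
    rw [a0, a1, a2]
    have : 1 - (1 * w 0 + 0 * w 1 + 0 * w 2) ^ 2 = w 1 ^ 2 + w 2 ^ 2 := by linear_combination (-1 : ℝ) * e6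
    rw [this]
    ring

lemma tri (e : E3) (he : ‖e‖ = 1) : ∃ e' e'' : E3, ‖e'‖ = 1 ∧ ‖e''‖ = 1 ∧
    ∀ u : E3, ⟪u, e⟫ ^ 2 + ⟪u, e'⟫ ^ 2 + ⟪u, e''⟫ ^ 2 = ‖u‖ ^ 2 := by
  obtain ⟨Q, hQ⟩ := exists_rot e (EuclideanSpace.single 0 1) he (by simp)
  refine ⟨Q.symm (EuclideanSpace.single 1 1), Q.symm (EuclideanSpace.single 2 1), by simp, by simp, fun u => ?_⟩
  have e1 : ∀ x, ⟪u, Q.symm x⟫ = ⟪Q u, x⟫ := by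
    intro x
    rw [← Q.inner_map_map]; simp
  have e4 : ⟪u, e⟫ = ⟪Q u, EuclideanSpace.single 0 1⟫ := by rw [← hQ, Q.inner_map_map]
  have e5 : ‖u‖ ^ 2 = ‖Q u‖ ^ 2 := by simp
  rw [e1, e1, e4, e5, norm3]
  simp [inner3]

/-- the situation at a fixed time when the angular momentum of the kernel diverges -/
structure Wild (b : ℝ → ℝ) (φ : E3 → ℝ) (r0 : ℝ) : Prop where
  hbm : Measurable b
  hb : ∀ x, 0 ≤ b x
  hP : IsPhi φ
  int : ∀ ξ : E3, Integrable (qInt b φ ξ) sphμ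
  wild : ∀ ξ : E3, ξ ≠ 0 →
    ¬ Integrable (fun σ : sphere (0:E3) 1 => (fun c => b c * (1 - c ^ 2)) (⟪ξ, (σ : E3)⟫ / ‖ξ‖)) sphμ
  pos : 0 < r0
  half : ∀ ξ : E3, ‖ξ‖ ≤ r0 → 1 / 2 ≤ φ ξ

/-- minus the logarithm -/
def Lf (φ : E3 → ℝ) (ξ : E3) : ℝ := -Real.log (φ ξ)

/-- the defect -/
def zf (φ : E3 → ℝ) (ξ : E3) (σ : sphere (0:E3) 1) : ℝ :=
  Lf φ (xiPlus ξ σ) + Lf φ (xiMinus ξ σ) - Lf φ ξ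

section
variable {b : ℝ → ℝ} {φ : E3 → ℝ} {r0 : ℝ}

lemma Wild.noTouch0 (h : Wild b φ r0) {n : ℕ} (R : Fin n → E3 ≃ₗᵢ[ℝ] E3) {ξ : E3} (hξ : ξ ≠ 0)
    (hR : ∀ i, R i ξ = ξ) {c' : ℝ} (hc' : 0 < c')
    (hz : ∀ σ : sphere (0:E3) 1, c' * (1 - (⟪ξ, (σ : E3)⟫ / ‖ξ‖) ^ 2) ≤
      ∑ i, |φ (xiPlus ξ (sphMap (R i) σ)) * φ (xiMinus ξ (sphMap (R i) σ)) - φ ξ|) : False := by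
  apply h.wild ξ hξ
  have hI : Integrable (fun σ => ∑ i, |qInt b φ ξ (sphMap (R i) σ)|) sphμ := by
    refine integrable_finsetSum _ fun i _ => ?_
    exact ((sphMap_mp (R i)).integrable_comp_of_integrable (h.int ξ)).abs
  have hbm := h.hbm
  have hmc : Measurable (fun σ : sphere (0:E3) 1 => ⟪ξ, (σ : E3)⟫ / ‖ξ‖) :=
    Continuous.measurable (by fun_prop)
  have hgm : Measurable (fun c => b c * (1 - c ^ 2)) := by fun_prop
  refine (hI.const_mul (1 / c')).mono' (hgm.comp hmc).aestronglyMeasurable (ae_of_all _ fun σ => ?_)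
  have hin : ∀ i, ⟪ξ, ((sphMap (R i) σ : sphere (0:E3) 1) : E3)⟫ = ⟪ξ, (σ : E3)⟫ := by
    intro i
    show ⟪ξ, R i (σ : E3)⟫ = _
    conv_lhs => rw [← hR i]
    rw [(R i).inner_map_map]
  have hc := cos_mem ξ σ
  have hzσ := hz σ
  unfold qInt
  simp only [hin]
  set c := ⟪ξ, (σ : E3)⟫ / ‖ξ‖
  rw [← sq_le_one_iff_abs_le_one] at hc
  have hbc := h.hb c
  rw [Real.norm_of_nonneg (mul_nonneg hbc (by linarith))]
  simp only [abs_mul, abs_of_nonneg hbc]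
  rw [← Finset.mul_sum]
  have := mul_le_mul_of_nonneg_left hzσ hbc
  rw [one_div, ← div_eq_inv_mul, le_div_iff₀ hc']
  linarith

lemma Wild.cont (h : Wild b φ r0) : ContinuousOn (Lf φ) (closedBall 0 r0) := by
  unfold Lf
  refine (ContinuousOn.log h.hP.continuous.continuousOn ?_).neg
  intro ξ hξ
  have := h.half ξ (by simpa using hξ)
  linarith

lemma Wild.L_nonneg (h : Wild b φ r0) (ξ : E3) : 0 ≤ Lf φ ξ := by
  unfold Lf
  have := Real.log_nonpos (h.hP.1 ξ) (h.hP.le_one ξ)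
  linarith

lemma Wild.L_zero (h : Wild b φ r0) : Lf φ 0 = 0 := by
  unfold Lf; rw [h.hP.zero]; simp

lemma Wild.exp_L (h : Wild b φ r0) {ξ : E3} (hξ : ‖ξ‖ ≤ r0) : φ ξ = Real.exp (-Lf φ ξ) := by
  unfold Lf
  rw [neg_neg, Real.exp_log]
  linarith [h.half ξ hξ]

lemma Wild.D_le_L (h : Wild b φ r0) {ξ : E3} (hξ : ‖ξ‖ ≤ r0) : 1 - φ ξ ≤ Lf φ ξ := by
  rw [h.exp_L hξ]
  have := Real.add_one_le_exp (-Lf φ ξ)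
  linarith

lemma Wild.L_le (h : Wild b φ r0) {ξ : E3} (hξ : ‖ξ‖ ≤ r0) :
    Lf φ ξ ≤ (1 - φ ξ) + 2 * (1 - φ ξ) ^ 2 := by
  have h1 := h.half ξ hξ
  have h2 := h.hP.le_one ξ
  have := Real.one_sub_inv_le_log_of_pos (show 0 < φ ξ by linarith)
  unfold Lf
  refine le_trans (neg_le_neg this) ?_
  have h3 : (φ ξ)⁻¹ * φ ξ = 1 := inv_mul_cancel₀ (by linarith)
  have h4 : 0 ≤ (φ ξ)⁻¹ := by positivity
  have h5 : (φ ξ)⁻¹ ≤ 2 := by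
    rw [inv_le_comm₀ (by linarith) (by norm_num)]; linarith
  have h6 : -(1 - (φ ξ)⁻¹) = (1 - φ ξ) + (φ ξ)⁻¹ * (1 - φ ξ) ^ 2 := by
    field_simp; ring
  rw [h6]
  gcongr

lemma xi_le (ξ : E3) (σ : sphere (0:E3) 1) : ‖xiPlus ξ σ‖ ≤ ‖ξ‖ ∧ ‖xiMinus ξ σ‖ ≤ ‖ξ‖ := by
  have h := abs_le.1 (cos_mem ξ σ)
  constructor
  · apply le_of_sq_le_sq _ (norm_nonneg _)
    rw [norm_sq_xiPlus]; nlinarith [sq_nonneg ‖ξ‖]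
  · apply le_of_sq_le_sq _ (norm_nonneg _)
    rw [norm_sq_xiMinus]; nlinarith [sq_nonneg ‖ξ‖]

lemma Wild.z_le (h : Wild b φ r0) {ξ : E3} (hξ : ‖ξ‖ ≤ r0) (σ : sphere (0:E3) 1) :
    |zf φ ξ σ| / 6 ≤ |φ (xiPlus ξ σ) * φ (xiMinus ξ σ) - φ ξ| := by
  obtain ⟨hp, hm⟩ := xi_le ξ σ
  have h1 := h.exp_L hξ
  have h2 := h.exp_L (hp.trans hξ)
  have h3 := h.exp_L (hm.trans hξ)
  have e1 : φ (xiPlus ξ σ) * φ (xiMinus ξ σ) - φ ξ = φ ξ * (Real.exp (-zf φ ξ σ) - 1) := by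
    rw [h1, h2, h3, mul_sub, ← Real.exp_add, ← Real.exp_add, mul_one]
    unfold zf
    congr 2; ring
  have hh := h.half ξ hξ
  have hL : ∀ x : E3, ‖x‖ ≤ r0 → Lf φ x ≤ 1 := by
    intro x hx
    have := h.L_le hx
    have := h.half x hx
    have := h.hP.le_one x
    nlinarith
  have hz2 : zf φ ξ σ ≤ 2 := by
    unfold zf
    have := hL _ (hp.trans hξ)
    have := hL _ (hm.trans hξ)
    have := h.L_nonneg ξ
    linarith
  rw [e1, abs_mul, abs_of_nonneg (by linarith : 0 ≤ φ ξ)]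
  have key : |zf φ ξ σ| / 3 ≤ |Real.exp (-zf φ ξ σ) - 1| := by
    generalize zf φ ξ σ = z at *
    rcases le_total 0 z with hz | hz
    · have : Real.exp (-z) ≤ 1 - z / 3 := by
        rw [Real.exp_neg, inv_le_comm₀ (Real.exp_pos _) (by linarith)]
        refine le_trans ?_ (Real.add_one_le_exp z)
        rw [inv_le_iff_one_le_mul₀ (by linarith)]
        nlinarith
      rw [abs_of_nonneg hz, abs_of_nonpos (by linarith)]
      linarith
    · have := Real.add_one_le_exp (-z)
      rw [abs_of_nonpos hz, abs_of_nonneg (by linarith)]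
      linarith
  have : 0 ≤ |Real.exp (-zf φ ξ σ) - 1| := abs_nonneg _
  nlinarith

lemma Wild.noTouch (h : Wild b φ r0) {n : ℕ} (R : Fin n → E3 ≃ₗᵢ[ℝ] E3) {ξ : E3} (hξ : ξ ≠ 0) (hξ0 : ‖ξ‖ ≤ r0)
    (hR : ∀ i, R i ξ = ξ) {c' : ℝ} (hc' : 0 < c')
    (hz : ∀ σ : sphere (0:E3) 1, c' * (1 - (⟪ξ, (σ : E3)⟫ / ‖ξ‖) ^ 2) ≤
      ∑ i, |zf φ ξ (sphMap (R i) σ)|) : False := by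
  refine h.noTouch0 R hξ hR (c' := c' / 6) (by positivity) fun σ => ?_
  have h1 := hz σ
  have h2 : (∑ i, |zf φ ξ (sphMap (R i) σ)|) / 6 ≤
      ∑ i, |φ (xiPlus ξ (sphMap (R i) σ)) * φ (xiMinus ξ (sphMap (R i) σ)) - φ ξ| := by
    rw [Finset.sum_div]
    exact Finset.sum_le_sum fun i _ => h.z_le hξ0 _
  linarith

lemma Wild.noTouch1 (h : Wild b φ r0) {ξ : E3} (hξ : ξ ≠ 0) (hξ0 : ‖ξ‖ ≤ r0) {c' : ℝ} (hc' : 0 < c')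
    (hz : ∀ σ : sphere (0:E3) 1, c' * (1 - (⟪ξ, (σ : E3)⟫ / ‖ξ‖) ^ 2) ≤ |zf φ ξ σ|) : False := by
  refine h.noTouch (n := 1) (fun _ => LinearIsometryEquiv.refl ℝ E3) hξ hξ0 (fun _ => rfl) hc' fun σ => ?_
  simp only [Finset.univ_unique, Finset.sum_const, Finset.card_singleton, one_smul]
  exact hz σ

/-- minimum on the punctured ball, given that the values near the origin are large -/
lemma exists_min {H : E3 → ℝ} {r ρ m : ℝ} (hH : ContinuousOn H (closedBall 0 r \ {0})) (hρ : 0 < ρ)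
    (hnear : ∀ ξ : E3, ξ ≠ 0 → ‖ξ‖ < ρ → m ≤ H ξ) {ξ1 : E3} (h10 : ξ1 ≠ 0) (h1 : ‖ξ1‖ ≤ r) (h1m : H ξ1 < m) :
    ∃ ξ : E3, ξ ≠ 0 ∧ ‖ξ‖ ≤ r ∧ H ξ ≤ H ξ1 ∧ ∀ η : E3, η ≠ 0 → ‖η‖ ≤ r → H ξ ≤ H η := by
  have hC : IsCompact (closedBall (0:E3) r \ ball 0 ρ) := (isCompact_closedBall _ _).diff isOpen_ball
  have hmem : ∀ η : E3, ‖η‖ ≤ r → ρ ≤ ‖η‖ → η ∈ (closedBall (0:E3) r \ ball 0 ρ) := fun η h1 h2 =>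
    ⟨by simpa using h1, by simpa using h2⟩
  have h1ρ : ρ ≤ ‖ξ1‖ := by
    by_contra! hc
    have := hnear ξ1 h10 hc; linarith
  obtain ⟨ξ, hξ, hmin⟩ := hC.exists_isMinOn ⟨ξ1, hmem ξ1 h1 h1ρ⟩ (hH.mono (by
    intro x hx
    refine ⟨hx.1, ?_⟩
    rintro rfl
    exact hx.2 (by simpa using hρ)))
  have h2 := hmin (hmem ξ1 h1 h1ρ)
  simp only [Set.mem_ofPred_eq] at h2
  refine ⟨ξ, ?_, by simpa using hξ.1, h2, ?_⟩
  · rintro rfl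
    exact hξ.2 (by simpa using hρ)
  · intro η hη hηr
    rcases lt_or_ge ‖η‖ ρ with h3 | h3
    · have := hnear η hη h3
      linarith
    · exact hmin (hmem η hηr h3)

lemma Wild.S1 (h : Wild b φ r0) {m ρ : ℝ} (hρ : 0 < ρ) (hnear : ∀ ξ : E3, ‖ξ‖ < ρ → m * ‖ξ‖ ^ 2 ≤ Lf φ ξ) :
    ∀ ξ : E3, ‖ξ‖ ≤ r0 → m * ‖ξ‖ ^ 2 ≤ Lf φ ξ := by
  by_contra! hcon
  obtain ⟨ξ1, h1, h1m⟩ := hcon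
  have h10 : ξ1 ≠ 0 := by
    rintro rfl
    rw [h.L_zero] at h1m; simp at h1m
  have hy1 : 0 < ‖ξ1‖ ^ 2 := by have := norm_pos_iff.2 h10; positivity
  have hlt : Lf φ ξ1 / ‖ξ1‖ ^ 2 < m := by rw [div_lt_iff₀ hy1]; exact h1m
  set c' := (m - Lf φ ξ1 / ‖ξ1‖ ^ 2) / (2 * ‖ξ1‖ ^ 2) with hc'
  have hc'0 : 0 < c' := div_pos (by linarith) (by linarith)
  obtain ⟨ξ, hξ0, hξr, -, hmin⟩ := exists_min (H := fun ξ => Lf φ ξ / ‖ξ‖ ^ 2 + c' * ‖ξ‖ ^ 2) (r := r0) (ρ := ρ) (m := m)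
    (by
      refine ContinuousOn.add (ContinuousOn.div (h.cont.mono sdiff_subset) (by fun_prop) ?_) (by fun_prop)
      intro x hx
      have : x ≠ 0 := hx.2
      have := norm_pos_iff.2 this
      positivity) hρ
    (by
      intro ξ hξ hξρ
      have := norm_pos_iff.2 hξ
      have h2 : m ≤ Lf φ ξ / ‖ξ‖ ^ 2 := by
        rw [le_div_iff₀ (by positivity)]; exact hnear ξ hξρ
      have : 0 ≤ c' * ‖ξ‖ ^ 2 := by positivity
      linarith) h10 h1
    (by
      have : c' * ‖ξ1‖ ^ 2 = (m - Lf φ ξ1 / ‖ξ1‖ ^ 2) / 2 := by rw [hc']; field_simp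
      simp only [this]; linarith)
  set V := Lf φ ξ / ‖ξ‖ ^ 2 + c' * ‖ξ‖ ^ 2 with hV
  have hn := norm_pos_iff.2 hξ0
  have hL0 : Lf φ ξ = V * ‖ξ‖ ^ 2 - c' * ‖ξ‖ ^ 4 := by rw [hV]; field_simp; ring
  have hL : ∀ η : E3, ‖η‖ ≤ r0 → V * ‖η‖ ^ 2 - c' * ‖η‖ ^ 4 ≤ Lf φ η := by
    intro η hη
    rcases eq_or_ne η 0 with rfl | h0
    · rw [h.L_zero]; simp
    · have h2 := hmin η h0 hη
      have hn2 := norm_pos_iff.2 h0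
      have h3 := mul_le_mul_of_nonneg_right h2 (sq_nonneg ‖η‖)
      have h4 : (Lf φ η / ‖η‖ ^ 2 + c' * ‖η‖ ^ 2) * ‖η‖ ^ 2 = Lf φ η + c' * ‖η‖ ^ 4 := by field_simp
      rw [h4] at h3
      linarith
  refine h.noTouch1 hξ0 hξr (c' := c' * ‖ξ‖ ^ 4 / 2) (by positivity) fun σ => ?_
  refine le_trans ?_ (le_abs_self _)
  obtain ⟨hp, hm⟩ := xi_le ξ σ
  have l1 := hL _ (hp.trans hξr)
  have l2 := hL _ (hm.trans hξr)
  unfold zf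
  rw [hL0]
  have e1 := norm_sq_xiPlus ξ σ
  have e2 := norm_sq_xiMinus ξ σ
  have e3 : ∀ x : E3, ‖x‖ ^ 4 = (‖x‖ ^ 2) ^ 2 := fun x => by ring
  rw [e3, e1] at l1
  rw [e3, e2] at l2
  refine le_trans (le_of_eq ?_) (sub_le_sub_right (add_le_add l1 l2) _)
  ring

lemma Wild.S3 (h : Wild b φ r0) {m ρ : ℝ} (hρ : 0 < ρ) (hnear : ∀ ξ : E3, ‖ξ‖ < ρ → Lf φ ξ ≤ m * ‖ξ‖ ^ 2) :
    ∀ ξ : E3, ‖ξ‖ ≤ r0 → Lf φ ξ ≤ m * ‖ξ‖ ^ 2 := by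
  by_contra! hcon
  obtain ⟨ξ1, h1, h1m⟩ := hcon
  have h10 : ξ1 ≠ 0 := by
    rintro rfl
    rw [h.L_zero] at h1m; simp at h1m
  have hy1 : 0 < ‖ξ1‖ ^ 2 := by have := norm_pos_iff.2 h10; positivity
  have hlt : m < Lf φ ξ1 / ‖ξ1‖ ^ 2 := by rw [lt_div_iff₀ hy1]; exact h1m
  set c' := (Lf φ ξ1 / ‖ξ1‖ ^ 2 - m) / (2 * ‖ξ1‖ ^ 2) with hc'
  have hc'0 : 0 < c' := div_pos (by linarith) (by linarith)
  obtain ⟨ξ, hξ0, hξr, -, hmin⟩ := exists_min (H := fun ξ => -(Lf φ ξ / ‖ξ‖ ^ 2) + c' * ‖ξ‖ ^ 2) (r := r0) (ρ := ρ) (m := -m)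
    (by
      refine ContinuousOn.add (ContinuousOn.div (h.cont.mono sdiff_subset) (by fun_prop) ?_).neg (by fun_prop)
      intro x hx
      have : x ≠ 0 := hx.2
      have := norm_pos_iff.2 this
      positivity) hρ
    (by
      intro ξ hξ hξρ
      have := norm_pos_iff.2 hξ
      have h2 : Lf φ ξ / ‖ξ‖ ^ 2 ≤ m := by
        rw [div_le_iff₀ (by positivity)]; exact hnear ξ hξρ
      have : 0 ≤ c' * ‖ξ‖ ^ 2 := by positivity
      linarith) h10 h1
    (by
      have : c' * ‖ξ1‖ ^ 2 = (Lf φ ξ1 / ‖ξ1‖ ^ 2 - m) / 2 := by rw [hc']; field_simp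
      simp only [this]; linarith)
  set V := -(Lf φ ξ / ‖ξ‖ ^ 2) + c' * ‖ξ‖ ^ 2 with hV
  have hn := norm_pos_iff.2 hξ0
  have hL0 : Lf φ ξ = -(V * ‖ξ‖ ^ 2) + c' * ‖ξ‖ ^ 4 := by rw [hV]; field_simp; ring
  have hL : ∀ η : E3, ‖η‖ ≤ r0 → Lf φ η ≤ -(V * ‖η‖ ^ 2) + c' * ‖η‖ ^ 4 := by
    intro η hη
    rcases eq_or_ne η 0 with rfl | h0
    · rw [h.L_zero]; simp
    · have h2 := hmin η h0 hη
      have hn2 := norm_pos_iff.2 h0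
      have h3 := mul_le_mul_of_nonneg_right h2 (sq_nonneg ‖η‖)
      have h4 : (-(Lf φ η / ‖η‖ ^ 2) + c' * ‖η‖ ^ 2) * ‖η‖ ^ 2 = -Lf φ η + c' * ‖η‖ ^ 4 := by field_simp
      rw [h4] at h3
      linarith
  refine h.noTouch1 hξ0 hξr (c' := c' * ‖ξ‖ ^ 4 / 2) (by positivity) fun σ => ?_
  refine le_trans ?_ (neg_le_abs _)
  obtain ⟨hp, hm⟩ := xi_le ξ σ
  have l1 := hL _ (hp.trans hξr)
  have l2 := hL _ (hm.trans hξr)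
  unfold zf
  rw [hL0]
  have e1 := norm_sq_xiPlus ξ σ
  have e2 := norm_sq_xiMinus ξ σ
  have e3 : ∀ x : E3, ‖x‖ ^ 4 = (‖x‖ ^ 2) ^ 2 := fun x => by ring
  rw [e3, e1] at l1
  rw [e3, e2] at l2
  refine le_trans (le_of_eq ?_) (neg_le_neg (sub_le_sub_right (add_le_add l1 l2) _))
  ring
end

section
variable {b : ℝ → ℝ} {φ : E3 → ℝ} {r0 : ℝ}

lemma Wild.exists_V (h : Wild b φ r0) : ∃ V, 0 ≤ V ∧ (∀ ξ : E3, ‖ξ‖ ≤ r0 → V * ‖ξ‖ ^ 2 ≤ Lf φ ξ) ∧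
    ∀ m > V, ∀ ρ > 0, ∃ ξ : E3, ξ ≠ 0 ∧ ‖ξ‖ < ρ ∧ Lf φ ξ < m * ‖ξ‖ ^ 2 := by
  set S : Set ℝ := {m | ∀ ξ : E3, ‖ξ‖ ≤ r0 → m * ‖ξ‖ ^ 2 ≤ Lf φ ξ} with hS
  have h0 : (0:ℝ) ∈ S := by
    intro ξ _
    rw [zero_mul]; exact h.L_nonneg ξ
  have hr := h.pos
  set x1 : E3 := EuclideanSpace.single 0 r0 with hx1
  have hx1n : ‖x1‖ = r0 := by simp [hx1, abs_of_pos hr]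
  have hbdd : BddAbove S := by
    refine ⟨Lf φ x1 / r0 ^ 2, fun m hm => ?_⟩
    rw [le_div_iff₀ (by positivity)]
    have := hm x1 hx1n.le
    rwa [hx1n] at this
  refine ⟨sSup S, le_csSup hbdd h0, ?_, ?_⟩
  · intro ξ hξ
    rcases eq_or_ne ξ 0 with rfl | hξ0
    · rw [h.L_zero]; simp
    · have hn := norm_pos_iff.2 hξ0
      rw [← le_div_iff₀ (by positivity)]
      refine csSup_le ⟨0, h0⟩ fun m hm => ?_
      rw [le_div_iff₀ (by positivity)]
      exact hm ξ hξ
  · intro m hm ρ hρ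
    by_contra! hcon
    have : m ∈ S := by
      apply h.S1 hρ
      intro ξ hξ
      rcases eq_or_ne ξ 0 with rfl | hξ0
      · rw [h.L_zero]; simp
      · exact hcon ξ hξ0 hξ
    have := le_csSup hbdd this
    linarith

lemma IsPhi.double_pow (h : IsPhi φ) (a : E3) (j : ℕ) : 1 - φ (((2:ℝ) ^ j) • a) ≤ 4 ^ j * (1 - φ a) := by
  induction j with
  | zero => simp
  | succ j ih =>
    have h1 := h.double (((2:ℝ) ^ j) • a)
    rw [smul_smul, ← pow_succ'] at h1
    calc 1 - φ ((2:ℝ) ^ (j + 1) • a) ≤ 4 * (1 - φ ((2:ℝ) ^ j • a)) := h1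
      _ ≤ 4 * (4 ^ j * (1 - φ a)) := by gcongr
      _ = _ := by ring

lemma Wild.exists_dir (h : Wild b φ r0) {V : ℝ}
    (hV : ∀ m > V, ∀ ρ > 0, ∃ ξ : E3, ξ ≠ 0 ∧ ‖ξ‖ < ρ ∧ Lf φ ξ < m * ‖ξ‖ ^ 2) :
    ∃ e : E3, e ≠ 0 ∧ ‖e‖ ≤ r0 ∧ ∀ i : ℕ, 1 - φ (((1/2:ℝ) ^ i) • e) ≤ V * ‖((1/2:ℝ) ^ i) • e‖ ^ 2 := by
  have hr := h.pos
  have step : ∀ n : ℕ, ∃ η : E3, η ∈ closedBall (0:E3) r0 \ ball 0 (r0 / 2) ∧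
      ∀ i ≤ n, 1 - φ (((1/2:ℝ) ^ i) • η) ≤ (V + 1 / ((n:ℝ) + 1)) * ‖((1/2:ℝ) ^ i) • η‖ ^ 2 := by
    intro n
    obtain ⟨ξ, hξ0, hξρ, hξ⟩ := hV (V + 1 / ((n:ℝ) + 1)) (by simp; positivity) (r0 / 2 ^ (n + 1)) (by positivity)
    have hn := norm_pos_iff.2 hξ0
    set m := V + 1 / ((n:ℝ) + 1)
    have hDξ : 1 - φ ξ ≤ m * ‖ξ‖ ^ 2 := by
      have : ‖ξ‖ ≤ r0 := hξρ.le.trans (div_le_self hr.le (one_le_pow₀ (by norm_num)))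
      exact (h.D_le_L this).trans hξ.le
    obtain ⟨j, hj1, hj2⟩ := exists_nat_pow_near (x := r0 / ‖ξ‖) (y := 2) (by
      rw [one_le_div hn]
      exact hξρ.le.trans (div_le_self hr.le (one_le_pow₀ (by norm_num)))) (by norm_num)
    rw [le_div_iff₀ hn] at hj1
    rw [div_lt_iff₀ hn] at hj2
    have hnj : n ≤ j := by
      by_contra! hc
      have h1 : (2:ℝ) ^ (j + 1) ≤ 2 ^ (n + 1) := pow_le_pow_right₀ (by norm_num) (by omega)
      rw [lt_div_iff₀ (by positivity)] at hξρ
      nlinarith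
    refine ⟨((2:ℝ) ^ j) • ξ, ⟨?_, ?_⟩, ?_⟩
    · simpa [norm_smul] using hj1
    · simp only [mem_ball, dist_zero_right, norm_smul, norm_pow, Real.norm_ofNat, not_lt]
      rw [pow_succ] at hj2; linarith
    · intro i hi
      have hij : i ≤ j := hi.trans hnj
      have e1 : ((1/2:ℝ) ^ i) • ((2:ℝ) ^ j) • ξ = ((2:ℝ) ^ (j - i)) • ξ := by
        rw [smul_smul]
        congr 1
        obtain ⟨l, rfl⟩ := Nat.exists_eq_add_of_le hij
        rw [Nat.add_sub_cancel_left, pow_add, ← mul_assoc, ← mul_pow]; norm_num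
      rw [e1]
      refine (h.hP.double_pow ξ (j - i)).trans ?_
      rw [norm_smul, norm_pow, Real.norm_ofNat, mul_pow, ← pow_mul, mul_comm (j - i) 2, pow_mul]
      norm_num
      have : (0:ℝ) ≤ 4 ^ (j - i) := by positivity
      nlinarith
  choose η hη hηi using step
  have hC : IsCompact (closedBall (0:E3) r0 \ ball 0 (r0 / 2)) := (isCompact_closedBall _ _).diff isOpen_ball
  obtain ⟨e, he, f, hf, hlim⟩ := hC.tendsto_subseq hη
  refine ⟨e, ?_, by simpa using he.1, fun i => ?_⟩
  · rintro rfl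
    exact he.2 (by simpa using hr)
  · have c1 := h.hP.continuous
    have t1 : Tendsto (fun n => 1 - φ (((1/2:ℝ) ^ i) • η (f n))) atTop (𝓝 (1 - φ (((1/2:ℝ) ^ i) • e))) :=
      (Continuous.tendsto (f := fun x => 1 - φ (((1/2:ℝ) ^ i) • x)) (by fun_prop) e).comp hlim
    have t2 : Tendsto (fun n => ‖((1/2:ℝ) ^ i) • η (f n)‖ ^ 2) atTop (𝓝 (‖((1/2:ℝ) ^ i) • e‖ ^ 2)) :=
      (Continuous.tendsto (f := fun x : E3 => ‖((1/2:ℝ) ^ i) • x‖ ^ 2) (by fun_prop) e).comp hlim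
    have t3 : Tendsto (fun n => V + 1 / (((f n : ℕ):ℝ) + 1)) atTop (𝓝 (V + 0)) :=
      tendsto_const_nhds.add ((tendsto_one_div_add_atTop_nhds_zero_nat (𝕜 := ℝ)).comp hf.tendsto_atTop)
    rw [add_zero] at t3
    refine le_of_tendsto_of_tendsto t1 (t3.mul t2) ?_
    filter_upwards [hf.tendsto_atTop.eventually_ge_atTop i] with n hn
    exact hηi (f n) i hn

lemma Wild.D_lower (h : Wild b φ r0) {V δ : ℝ} (hV0 : 0 ≤ V) (hV : ∀ ξ : E3, ‖ξ‖ ≤ r0 → V * ‖ξ‖ ^ 2 ≤ Lf φ ξ) (hδ : 0 < δ) :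
    ∃ ρ > 0, ∀ ξ : E3, ‖ξ‖ ≤ ρ → (V - δ) * ‖ξ‖ ^ 2 ≤ 1 - φ ξ := by
  have hr := h.pos
  rcases le_or_gt V δ with hVδ | hVδ
  · refine ⟨1, one_pos, fun ξ _ => ?_⟩
    have := h.hP.le_one ξ
    have : (V - δ) * ‖ξ‖ ^ 2 ≤ 0 := mul_nonpos_of_nonpos_of_nonneg (by linarith) (sq_nonneg _)
    linarith
  have hVp : 0 < V := hδ.trans hVδ
  have hc : Tendsto (fun ξ => 1 - φ ξ) (𝓝 0) (𝓝 (1 - φ 0)) := by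
    have := h.hP.continuous
    exact Continuous.tendsto (by fun_prop) 0
  rw [h.hP.zero, sub_self] at hc
  obtain ⟨ρ, hρ, hball⟩ := Metric.eventually_nhds_iff.1 (hc.eventually (gt_mem_nhds (show 0 < δ / (2 * V) by positivity)))
  refine ⟨min (ρ / 2) r0, lt_min (by positivity) hr, fun ξ hξ => ?_⟩
  have h1 := hball (y := ξ) (by rw [dist_zero_right]; have := hξ.trans (min_le_left _ _); linarith)
  have h2 := hV ξ (hξ.trans (min_le_right _ _))
  have h3 := h.L_le (hξ.trans (min_le_right _ _))
  have h4 := h.hP.le_one ξ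
  set D := 1 - φ ξ
  have hD0 : 0 ≤ D := by simp only [D]; linarith
  rw [lt_div_iff₀ (by positivity)] at h1
  by_contra! hcon
  have hy := sq_nonneg ‖ξ‖
  have h5 : 2 * D * V ≤ δ := by linarith
  have h6 : V * ‖ξ‖ ^ 2 < (V - δ) * ‖ξ‖ ^ 2 + 2 * D * ((V - δ) * ‖ξ‖ ^ 2) := by nlinarith
  have h7 : 2 * D * ((V - δ) * ‖ξ‖ ^ 2) ≤ δ * ‖ξ‖ ^ 2 := by
    calc 2 * D * ((V - δ) * ‖ξ‖ ^ 2) ≤ 2 * D * (V * ‖ξ‖ ^ 2) := by gcongr; linarith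
      _ = (2 * D * V) * ‖ξ‖ ^ 2 := by ring
      _ ≤ δ * ‖ξ‖ ^ 2 := by gcongr
  linarith

lemma Wild.q_lower (h : Wild b φ r0) {V δ : ℝ} (hV0 : 0 ≤ V) (hV : ∀ ξ : E3, ‖ξ‖ ≤ r0 → V * ‖ξ‖ ^ 2 ≤ Lf φ ξ) (hδ : 0 < δ)
    {μ : Measure E3} [IsProbabilityMeasure μ] (hμ : ∀ ξ, φ ξ = ∫ u, Real.cos ⟪u, ξ⟫ ∂μ) :
    ∀ᶠ M : ℕ in atTop, ∀ ξ : E3, (V - δ) * ‖ξ‖ ^ 2 ≤ qM μ M ξ := by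
  obtain ⟨ρ, hρ, hD⟩ := h.D_lower hV0 hV (half_pos hδ)
  have ht := (tail_tendsto μ).eventually (gt_mem_nhds (show 0 < δ * ρ ^ 2 / 4 by positivity))
  filter_upwards [ht] with M hM ξ
  rcases eq_or_ne ξ 0 with rfl | hξ0
  · simpa using qM_nonneg μ M 0
  have hn := norm_pos_iff.2 hξ0
  set x := (ρ / ‖ξ‖) • ξ with hx
  have hxn : ‖x‖ = ρ := by
    rw [hx, norm_smul, norm_div, norm_norm, Real.norm_of_nonneg hρ.le]; field_simp
  have h1 := hD x hxn.le
  have h2 := qM_upper hμ (M := (M:ℝ)) x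
  rw [hxn] at h1
  have h3 : (V - δ) * ρ ^ 2 ≤ qM μ M x := by nlinarith
  rw [hx, qM_smul, div_pow, div_mul_eq_mul_div, le_div_iff₀ (by positivity)] at h3
  have h4 : ρ ^ 2 * ((V - δ) * ‖ξ‖ ^ 2) ≤ ρ ^ 2 * qM μ M ξ := by linarith
  exact le_of_mul_le_mul_left h4 (by positivity)

lemma qM_tri (μ : Measure E3) [IsProbabilityMeasure μ] (M : ℝ) {e e' e'' : E3}
    (he : ∀ u : E3, ⟪u, e⟫ ^ 2 + ⟪u, e'⟫ ^ 2 + ⟪u, e''⟫ ^ 2 = ‖u‖ ^ 2) :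
    qM μ M e + qM μ M e' + qM μ M e'' = trM μ M := by
  unfold qM trM
  have h1 := integral_add ((qM_int (μ := μ) M e).add (qM_int M e')) (qM_int M e'')
  have h2 := integral_add (qM_int (μ := μ) M e) (qM_int M e')
  simp only [Pi.add_apply] at h1
  simp only [he] at h1
  rw [h2] at h1
  linarith

lemma qM_rot (μ : Measure E3) [IsProbabilityMeasure μ] (M : ℝ) {e σ x y z : E3}
    (he : ∀ u : E3, ⟪u, σ⟫ ^ 2 + ⟪u, x⟫ ^ 2 + ⟪u, y⟫ ^ 2 + ⟪u, z⟫ ^ 2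
      = 4 * ⟪e, σ⟫ ^ 2 * ⟪u, e⟫ ^ 2 + 2 * (1 - ⟪e, σ⟫ ^ 2) * (‖u‖ ^ 2 - ⟪u, e⟫ ^ 2)) :
    qM μ M σ + qM μ M x + qM μ M y + qM μ M z =
      4 * ⟪e, σ⟫ ^ 2 * qM μ M e + 2 * (1 - ⟪e, σ⟫ ^ 2) * (trM μ M - qM μ M e) := by
  unfold qM trM
  have i := fun x : E3 => qM_int (μ := μ) M x
  have it : IntegrableOn (fun u : E3 => ‖u‖ ^ 2) (closedBall (0:E3) M) μ := intOn_cont (by fun_prop) M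
  have h1 := integral_add (((i σ).add (i x)).add (i y)) (i z)
  have h2 := integral_add ((i σ).add (i x)) (i y)
  have h3 := integral_add (i σ) (i x)
  simp only [Pi.add_apply] at h1 h2
  simp only [he] at h1
  rw [h2, h3] at h1
  have h4 := integral_add ((i e).const_mul (4 * ⟪e, σ⟫ ^ 2)) ((it.sub (i e)).const_mul (2 * (1 - ⟪e, σ⟫ ^ 2)))
  simp only [Pi.sub_apply] at h4
  rw [h4, integral_const_mul, integral_const_mul, integral_sub it (i e)] at h1
  linarith

lemma Wild.iso (h : Wild b φ r0) {V : ℝ} (hV0 : 0 ≤ V) (hV : ∀ ξ : E3, ‖ξ‖ ≤ r0 → V * ‖ξ‖ ^ 2 ≤ Lf φ ξ)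
    {μ : Measure E3} [IsProbabilityMeasure μ] (hμ : ∀ ξ, φ ξ = ∫ u, Real.cos ⟪u, ξ⟫ ∂μ)
    (htr : ∀ M : ℕ, trM μ M ≤ 3 * V) : ∀ ξ : E3, ‖ξ‖ ≤ r0 → Lf φ ξ = V * ‖ξ‖ ^ 2 := by
  have hr := h.pos
  have hD : ∀ ξ : E3, 1 - φ ξ ≤ V * ‖ξ‖ ^ 2 := by
    intro ξ
    have key : ∀ δ > 0, 1 - φ ξ ≤ (V + 2 * δ) * ‖ξ‖ ^ 2 := by
      intro δ hδ
      have h1 : ∀ᶠ M : ℕ in atTop, 1 - φ ξ ≤ (V + 2 * δ) * ‖ξ‖ ^ 2 + 2 * μ.real (closedBall (0:E3) (M:ℝ))ᶜ := by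
        filter_upwards [h.q_lower hV0 hV hδ hμ] with M hM
        refine (qM_upper hμ (M := (M:ℝ)) ξ).trans ?_
        gcongr
        rcases eq_or_ne ξ 0 with rfl | hξ0
        · have := qM_smul μ M 0 0
          simp at this; simp [this]
        have hn := norm_pos_iff.2 hξ0
        obtain ⟨e', e'', he', he'', htri⟩ := tri ((‖ξ‖⁻¹) • ξ) (by
          rw [norm_smul, norm_inv, norm_norm, inv_mul_cancel₀ hn.ne'])
        have h2 := qM_tri μ M htri
        have h3 := hM e'
        have h4 := hM e''
        rw [he'] at h3
        rw [he''] at h4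
        have h5 := htr M
        rw [qM_smul, inv_pow, inv_mul_eq_div] at h2
        have h6 : qM μ M ξ / ‖ξ‖ ^ 2 ≤ V + 2 * δ := by linarith
        rwa [div_le_iff₀ (by positivity)] at h6
      have h2 := ((tail_tendsto μ).const_mul 2).const_add ((V + 2 * δ) * ‖ξ‖ ^ 2)
      rw [mul_zero, add_zero] at h2
      exact ge_of_tendsto h2 h1
    have hlim : Tendsto (fun δ : ℝ => (V + 2 * δ) * ‖ξ‖ ^ 2) (𝓝[>] 0) (𝓝 ((V + 2 * 0) * ‖ξ‖ ^ 2)) := by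
      apply Tendsto.mono_left _ nhdsWithin_le_nhds
      exact (Continuous.tendsto (by fun_prop) 0)
    rw [mul_zero, add_zero] at hlim
    exact ge_of_tendsto hlim (by filter_upwards [self_mem_nhdsWithin] with δ hδ using key δ hδ)
  have hup : ∀ m > V, ∀ ξ : E3, ‖ξ‖ ≤ r0 → Lf φ ξ ≤ m * ‖ξ‖ ^ 2 := by
    intro m hm
    have hpos : 0 < (m - V) / (2 * V ^ 2 + 1) := div_pos (by linarith) (by positivity)
    apply h.S3 (ρ := min r0 (√((m - V) / (2 * V ^ 2 + 1)))) (lt_min hr (Real.sqrt_pos.2 hpos))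
    intro ξ hξ
    have h1 := h.L_le (hξ.le.trans (min_le_left _ _))
    have h2 := hD ξ
    have h3 := h.hP.le_one ξ
    have h4 : (1 - φ ξ) ^ 2 ≤ (V * ‖ξ‖ ^ 2) ^ 2 := pow_le_pow_left₀ (by linarith) h2 2
    have h5 : ‖ξ‖ ^ 2 ≤ (m - V) / (2 * V ^ 2 + 1) := by
      have := hξ.le.trans (min_le_right _ _)
      rw [← Real.sq_sqrt hpos.le]
      gcongr
    rw [le_div_iff₀ (by positivity)] at h5
    have h6 : 2 * V ^ 2 * ‖ξ‖ ^ 2 ≤ m - V := by nlinarith [sq_nonneg ‖ξ‖]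
    have h7 := mul_le_mul_of_nonneg_right h6 (sq_nonneg ‖ξ‖)
    nlinarith
  intro ξ hξ
  refine le_antisymm ?_ (hV ξ hξ)
  have hlim : Tendsto (fun m : ℝ => m * ‖ξ‖ ^ 2) (𝓝[>] V) (𝓝 (V * ‖ξ‖ ^ 2)) := by
    apply Tendsto.mono_left _ nhdsWithin_le_nhds
    exact (Continuous.tendsto (by fun_prop) V)
  exact ge_of_tendsto hlim (by filter_upwards [self_mem_nhdsWithin] with m hm using hup m hm ξ hξ)
end

lemma qM_cont (μ : Measure E3) [IsProbabilityMeasure μ] (M : ℝ) : Continuous (qM μ M) := by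
  unfold qM
  refine continuous_const.mul ?_
  exact continuous_parametric_integral_of_continuous (f := fun (x u : E3) => ⟪u, x⟫ ^ 2) (by fun_prop)
    (isCompact_closedBall (0:E3) M)

section
variable {b : ℝ → ℝ} {φ : E3 → ℝ} {r0 : ℝ}

set_option maxHeartbeats 1000000 in
lemma Wild.aniso (h : Wild b φ r0) {V : ℝ} (hV0 : 0 ≤ V) (hV : ∀ ξ : E3, ‖ξ‖ ≤ r0 → V * ‖ξ‖ ^ 2 ≤ Lf φ ξ)
    {μ : Measure E3} [IsProbabilityMeasure μ] (hμ : ∀ ξ, φ ξ = ∫ u, Real.cos ⟪u, ξ⟫ ∂μ)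
    {e : E3} (he0 : e ≠ 0) (her : ‖e‖ ≤ r0)
    (he : ∀ i : ℕ, 1 - φ (((1/2:ℝ) ^ i) • e) ≤ V * ‖((1/2:ℝ) ^ i) • e‖ ^ 2)
    {M1 : ℕ} (htr : 3 * V < trM μ M1) : False := by
  have hr := h.pos
  set δ := (trM μ M1 / 3 - V) / 16 with hδdef
  have hδ : 0 < δ := by rw [hδdef]; linarith
  obtain ⟨M, hMlow, hM1⟩ := ((h.q_lower hV0 hV hδ hμ).and (eventually_ge_atTop M1)).exists
  have htrM : 3 * V + 48 * δ ≤ trM μ M := by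
    have := trM_mono μ (M := (M1:ℝ)) (M' := (M:ℝ)) (by exact_mod_cast hM1)
    rw [hδdef]; linarith
  set q := qM μ (M:ℝ) with hq
  have hqc : Continuous q := qM_cont μ M
  set A := 2 * V ^ 2 + (M:ℝ) ^ 4 with hA
  have hA0 : 0 ≤ A := by positivity
  have hen := norm_pos_iff.2 he0
  -- choose the scale
  obtain ⟨i, hi⟩ : ∃ i : ℕ, A * ‖((1/2:ℝ) ^ i) • e‖ ^ 2 ≤ δ := by
    have h1 : Tendsto (fun i : ℕ => A * ‖((1/2:ℝ) ^ i) • e‖ ^ 2) atTop (𝓝 (A * ‖(0:ℝ) • e‖ ^ 2)) := by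
      have h2 : Tendsto (fun i : ℕ => (1/2:ℝ) ^ i) atTop (𝓝 0) :=
        tendsto_pow_atTop_nhds_zero_of_lt_one (by norm_num) (by norm_num)
      exact (Continuous.tendsto (f := fun x : ℝ => A * ‖x • e‖ ^ 2) (by fun_prop) 0).comp h2
    simp only [zero_smul, norm_zero] at h1
    norm_num at h1
    obtain ⟨i, hi⟩ := (h1.eventually (gt_mem_nhds hδ)).exists
    refine ⟨i, ?_⟩
    norm_num
    exact hi.le
  set e1 := ((1/2:ℝ) ^ i) • e with he1
  have he10 : e1 ≠ 0 := by
    rw [he1]; exact smul_ne_zero (by positivity) he0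
  have he1n := norm_pos_iff.2 he10
  have he1r : ‖e1‖ ≤ r0 := by
    refine le_trans ?_ her
    rw [he1, norm_smul]
    have : ‖(1/2:ℝ) ^ i‖ ≤ 1 := by
      rw [norm_pow]; exact pow_le_one₀ (norm_nonneg _) (by norm_num)
    nlinarith
  set K := 2 * V ^ 2 + δ / ‖e1‖ ^ 2 with hK
  have hK0 : 0 < K := by positivity
  have hKy : K * ‖e1‖ ^ 2 = 2 * V ^ 2 * ‖e1‖ ^ 2 + δ := by rw [hK]; field_simp
  set H : E3 → ℝ := fun η => (Lf φ η - V / 2 * ‖η‖ ^ 2 - q η / 2) / ‖η‖ ^ 2 - K * ‖η‖ ^ 2 with hH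
  have hqL : ∀ η : E3, ‖η‖ ≤ r0 → q η - (M:ℝ) ^ 4 * ‖η‖ ^ 4 ≤ Lf φ η := fun η hη =>
    (qM_lower hμ η).trans (h.D_le_L hη)
  have hnear0 : ∀ η : E3, η ≠ 0 → ‖η‖ ≤ r0 → -(((M:ℝ) ^ 4 / 2 + K) * ‖η‖ ^ 2) ≤ H η := by
    intro η hη hηr
    have hn := norm_pos_iff.2 hη
    have h1 := hqL η hηr
    have h2 := hV η hηr
    have h3 : -((M:ℝ) ^ 4 / 2 * ‖η‖ ^ 2) ≤ (Lf φ η - V / 2 * ‖η‖ ^ 2 - q η / 2) / ‖η‖ ^ 2 := by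
      rw [le_div_iff₀ (by positivity)]
      have : -((M:ℝ) ^ 4 / 2 * ‖η‖ ^ 2) * ‖η‖ ^ 2 = -((M:ℝ) ^ 4 * ‖η‖ ^ 4) / 2 := by ring
      rw [this]; linarith
    simp only [hH]
    linarith
  set B := (M:ℝ) ^ 4 / 2 + K with hB
  have hB0 : 0 < B := by positivity
  have hHe1 : H e1 ≤ -(δ / 2) := by
    have h1 := he i
    have h2 := h.L_le he1r
    have h3 := hMlow e1
    have h4 := h.hP.le_one e1
    have h5 : (1 - φ e1) ^ 2 ≤ (V * ‖e1‖ ^ 2) ^ 2 := pow_le_pow_left₀ (by linarith) h1 2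
    have h6 : (Lf φ e1 - V / 2 * ‖e1‖ ^ 2 - q e1 / 2) / ‖e1‖ ^ 2 ≤ δ / 2 + 2 * V ^ 2 * ‖e1‖ ^ 2 := by
      rw [div_le_iff₀ (by positivity)]
      nlinarith
    simp only [hH]
    linarith
  have hsq : 0 < δ / 4 / B := by positivity
  obtain ⟨ξ, hξ0, hξr, hξH, hmin⟩ := exists_min (H := H) (r := ‖e1‖) (ρ := min r0 (√(δ / 4 / B))) (m := -(δ / 4))
    (by
      have hc : ContinuousOn (Lf φ) (closedBall 0 ‖e1‖ \ {0}) := h.cont.mono (by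
        intro x hx
        have := hx.1
        simp only [mem_closedBall, dist_zero_right] at this ⊢
        linarith)
      simp only [hH]
      refine ContinuousOn.sub (ContinuousOn.div ?_ (by fun_prop) ?_) (by fun_prop)
      · exact (hc.sub (by fun_prop)).sub (by fun_prop)
      · intro x hx
        have : x ≠ 0 := hx.2
        have := norm_pos_iff.2 this
        positivity)
    (lt_min hr (Real.sqrt_pos.2 hsq))
    (by
      intro η hη hηρ
      refine le_trans ?_ (hnear0 η hη (hηρ.le.trans (min_le_left _ _)))
      have h1 := hηρ.le.trans (min_le_right _ _)
      have h2 : ‖η‖ ^ 2 ≤ δ / 4 / B := by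
        rw [← Real.sq_sqrt hsq.le]
        gcongr
      rw [le_div_iff₀ hB0] at h2
      linarith) he10 le_rfl (by linarith)
  set ν := H ξ with hν
  have hν0 : ν ≤ 0 := by linarith
  have hn := norm_pos_iff.2 hξ0
  set y := ‖ξ‖ ^ 2 with hy
  have hy0 : 0 < y := by positivity
  have hyy1 : y ≤ ‖e1‖ ^ 2 := by rw [hy]; gcongr
  have hL0 : Lf φ ξ = V / 2 * y + q ξ / 2 + ν * y + K * y ^ 2 := by
    rw [hν]; simp only [hH]; rw [← hy]; field_simp; ring
  have hL : ∀ η : E3, ‖η‖ ≤ ‖ξ‖ → V / 2 * ‖η‖ ^ 2 + q η / 2 + ν * ‖η‖ ^ 2 + K * (‖η‖ ^ 2) ^ 2 ≤ Lf φ η := by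
    intro η hη
    rcases eq_or_ne η 0 with rfl | h0
    · rw [h.L_zero]
      have := qM_smul μ M 0 0
      simp at this
      simp [hq, this]
    · have h2 := hmin η h0 (hη.trans hξr)
      have hn2 := norm_pos_iff.2 h0
      have h3 := mul_le_mul_of_nonneg_right h2 (sq_nonneg ‖η‖)
      have h4 : H η * ‖η‖ ^ 2 = Lf φ η - V / 2 * ‖η‖ ^ 2 - q η / 2 - K * (‖η‖ ^ 2) ^ 2 := by
        simp only [hH]; field_simp
      rw [h4] at h3
      linarith
  set ehat := (‖ξ‖⁻¹) • ξ with hdef_ehat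
  have hnorm_ehat : ‖ehat‖ = 1 := by rw [hdef_ehat, norm_smul, norm_inv, norm_norm, inv_mul_cancel₀ hn.ne']
  have hqe : q ξ = y * q ehat := by
    rw [hdef_ehat, hq, qM_smul, inv_pow, ← hy]; field_simp
  have hKy2 : K * y ≤ 2 * δ := by
    have h1 : K * y ≤ K * ‖e1‖ ^ 2 := by gcongr
    have h2 : 2 * V ^ 2 * ‖e1‖ ^ 2 ≤ A * ‖e1‖ ^ 2 := by
      gcongr; rw [hA]; have : 0 ≤ (M:ℝ) ^ 4 := by positivity
      linarith
    linarith
  have hqle : q ehat ≤ V + 4 * δ := by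
    have h1 := hqL ξ (hξr.trans he1r)
    have e4 : ‖ξ‖ ^ 4 = y ^ 2 := by rw [hy]; ring
    rw [hL0, hqe, e4] at h1
    have h2 : y * q ehat ≤ y * (V + 2 * ν + 2 * (K + (M:ℝ) ^ 4) * y) := by linarith
    have h3 := le_of_mul_le_mul_left h2 hy0
    have h4 : (K + (M:ℝ) ^ 4) * y ≤ (K + (M:ℝ) ^ 4) * ‖e1‖ ^ 2 := by gcongr
    have h5 : (K + (M:ℝ) ^ 4) * ‖e1‖ ^ 2 = A * ‖e1‖ ^ 2 + δ := by rw [add_mul, hKy, hA]; ring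
    linarith
  obtain ⟨R, hRe, hrot⟩ := rot4 ehat hnorm_ehat
  have hRξ : R ξ = ξ := by
    have : ξ = ‖ξ‖ • ehat := by rw [hdef_ehat, smul_smul, mul_inv_cancel₀ hn.ne', one_smul]
    rw [this, map_smul, hRe]
  have hin : ∀ x : E3, ⟪ξ, R x⟫ = ⟪ξ, x⟫ := by
    intro x
    conv_lhs => rw [← hRξ]
    rw [R.inner_map_map]
  have hz : ∀ σ : sphere (0:E3) 1, y / 4 * (q (σ : E3) - q ehat) - K * y ^ 2 / 2 * (1 - (⟪ξ, (σ : E3)⟫ / ‖ξ‖) ^ 2) ≤ zf φ ξ σ := by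
    intro σ
    obtain ⟨hp, hm⟩ := xi_le ξ σ
    have l1 := hL _ hp
    have l2 := hL _ hm
    have p1 := norm_sq_xiPlus ξ σ
    have p2 := norm_sq_xiMinus ξ σ
    have hpara : q (xiPlus ξ σ) + q (xiMinus ξ σ) = y * q ehat / 2 + y / 2 * q (σ : E3) := by
      unfold xiPlus xiMinus
      rw [hq, qM_para, qM_smul, qM_smul, ← hq, hqe, hy]; ring
    unfold zf
    rw [p1, ← hy] at l1
    rw [p2, ← hy] at l2
    rw [hL0, hqe]
    generalize ⟪ξ, (σ : E3)⟫ / ‖ξ‖ = c at *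
    refine le_trans (le_of_eq ?_) (sub_le_sub_right (add_le_add l1 l2) _)
    linear_combination (-1/2 : ℝ) * hpara
  refine h.noTouch (n := 4) ![LinearIsometryEquiv.refl ℝ E3, R, R.trans R, (R.trans R).trans R] hξ0 (hξr.trans he1r)
    (by intro i; fin_cases i <;> simp [hRξ]) (c' := 14 * δ * y) (by positivity) fun σ => ?_
  rw [Fin.sum_univ_four]
  simp only [Matrix.cons_val_zero, Matrix.cons_val_one, Matrix.cons_val]
  have z0 := (hz (sphMap (LinearIsometryEquiv.refl ℝ E3) σ)).trans (le_abs_self _)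
  have z1 := (hz (sphMap R σ)).trans (le_abs_self _)
  have z2 := (hz (sphMap (R.trans R) σ)).trans (le_abs_self _)
  have z3 := (hz (sphMap ((R.trans R).trans R) σ)).trans (le_abs_self _)
  have hq4 := qM_rot μ M (e := ehat) (σ := σ) (x := R σ) (y := R (R σ)) (z := R (R (R σ)))
    (fun u => hrot u σ (by simp))
  rw [← hq] at hq4
  have hcc : ⟪ehat, (σ : E3)⟫ = ⟪ξ, (σ : E3)⟫ / ‖ξ‖ := by
    rw [hdef_ehat, inner_smul_left, div_eq_inv_mul]; simp
  rw [hcc] at hq4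
  have hc := cos_mem ξ σ
  simp only [sphMap, LinearIsometryEquiv.trans_apply, LinearIsometryEquiv.coe_refl, id, hin] at z0 z1 z2 z3 ⊢
  set c := ⟪ξ, (σ : E3)⟫ / ‖ξ‖
  rw [← sq_le_one_iff_abs_le_one] at hc
  have hc1 : 0 ≤ 1 - c ^ 2 := by linarith
  have hsum := add_le_add (add_le_add (add_le_add z0 z1) z2) z3
  refine le_trans ?_ hsum
  have e5 : y / 4 * (q (σ:E3) - q ehat) - K * y ^ 2 / 2 * (1 - c ^ 2) + (y / 4 * (q (R σ) - q ehat) - K * y ^ 2 / 2 * (1 - c ^ 2))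
      + (y / 4 * (q (R (R σ)) - q ehat) - K * y ^ 2 / 2 * (1 - c ^ 2))
      + (y / 4 * (q (R (R (R σ))) - q ehat) - K * y ^ 2 / 2 * (1 - c ^ 2))
      = (y * (1 - c ^ 2)) * ((trM μ M - 3 * q ehat) / 2 - 2 * (K * y)) := by
    linear_combination y / 4 * hq4
  rw [e5]
  have e6 : 14 * δ * y * (1 - c ^ 2) = (y * (1 - c ^ 2)) * (14 * δ) := by ring
  rw [e6]
  gcongr
  linarith

lemma Wild.gauss (h : Wild b φ r0) : ∃ V, ∀ ξ : E3, ‖ξ‖ ≤ r0 → Lf φ ξ = V * ‖ξ‖ ^ 2 := by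
  obtain ⟨V, hV0, hV, hVn⟩ := h.exists_V
  obtain ⟨e, he0, her, he⟩ := h.exists_dir hVn
  obtain ⟨-, μ, hμp, hμ⟩ := id h.hP
  refine ⟨V, ?_⟩
  by_cases htr : ∀ M : ℕ, trM μ M ≤ 3 * V
  · exact h.iso hV0 hV hμ htr
  · push Not at htr
    obtain ⟨M1, hM1⟩ := htr
    exact (h.aniso hV0 hV hμ he0 her he hM1).elim
end

lemma PhiSol.half {b : ℝ → ℝ} {φ : ℝ → E3 → ℝ} (h : PhiSol b φ) {τ T : ℝ} (hτ : 0 ≤ τ) :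
    ∃ r0 > 0, r0 ≤ 1 ∧ ∀ t ∈ Icc τ T, ∀ ξ : E3, ‖ξ‖ ≤ r0 → 1 / 2 ≤ φ t ξ := by
  have hcont : ContinuousOn (fun p : ℝ × E3 => φ p.1 p.2) (Icc τ T ×ˢ closedBall (0:E3) 1) :=
    h.cont.mono (fun p hp => ⟨by have := hp.1.1; simp only [mem_Ici]; linarith, mem_univ _⟩)
  have hcomp : IsCompact (Icc τ T ×ˢ closedBall (0:E3) 1) := isCompact_Icc.prod (isCompact_closedBall _ _)
  set S := (Icc τ T ×ˢ closedBall (0:E3) 1) ∩ (fun p : ℝ × E3 => φ p.1 p.2) ⁻¹' (Iic (1/2)) with hS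
  have hSc : IsCompact S := by
    apply hcomp.of_isClosed_subset _ inter_subset_left
    exact hcont.preimage_isClosed_of_isClosed hcomp.isClosed isClosed_Iic
  rcases S.eq_empty_or_nonempty with hSe | hSn
  · refine ⟨1, one_pos, le_rfl, fun t ht ξ hξ => ?_⟩
    by_contra! hc
    have : (t, ξ) ∈ S := ⟨⟨ht, by simpa using hξ⟩, hc.le⟩
    rw [hSe] at this
    exact this
  · obtain ⟨⟨t0, ξ0⟩, h0, hmin⟩ := hSc.exists_isMinOn hSn (f := fun p : ℝ × E3 => ‖p.2‖) (by fun_prop)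
    have hξ0 : ξ0 ≠ 0 := by
      rintro rfl
      have h1 : φ t0 0 ≤ 1 / 2 := h0.2
      rw [(h.isPhi t0 (by have := h0.1.1.1; simp at this; linarith)).zero] at h1
      norm_num at h1
    have hn := norm_pos_iff.2 hξ0
    have hn1 : ‖ξ0‖ ≤ 1 := by simpa using h0.1.2
    refine ⟨‖ξ0‖ / 2, by positivity, by linarith, fun t ht ξ hξ => ?_⟩
    by_contra! hc
    have h3 : (t, ξ) ∈ S := ⟨⟨ht, by simp; linarith⟩, hc.le⟩
    have h4 := hmin h3
    simp only [Set.mem_ofPred_eq] at h4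
    linarith

lemma persist {b : ℝ → ℝ} (hbm : Measurable b) (hb : ∀ x, 0 ≤ b x) {s k c0 : ℝ} (hk : KerLow b s k c0) {φ : ℝ → E3 → ℝ}
    (h : PhiSol b φ) {τ T : ℝ} (hτ : 0 < τ) (hτT : τ < T) (hne : ∃ ξ, φ τ ξ < 1) : ∃ ξ, φ T ξ < 1 := by
  obtain ⟨δ, hδ, t1, -, ht1, hnd⟩ := nd hb hk h hτ hne one_pos
  have hnd' := hnd τ ht1.le le_rfl
  set e : E3 := EuclideanSpace.single 0 (1/2) with he
  have hen : ‖e‖ = 1 / 2 := by simp [he]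
  have he0 : e ≠ 0 := by
    intro h0
    rw [h0] at hen; simp at hen
  by_cases hI : Integrable (fun σ : sphere (0:E3) 1 => (fun c => b c * (1 - c ^ 2)) (⟪e, (σ : E3)⟫ / ‖e‖)) sphμ
  · exact ⟨e, mp1 hbm hb h hτ hτT hδ hnd' he0 hen hI⟩
  · obtain ⟨r0, hr0, hr1, hhalf⟩ := h.half (T := T) hτ.le
    have hW : ∀ t ∈ Icc τ T, Wild b (φ t) r0 := fun t ht => by
      have ht0 : 0 ≤ t := hτ.le.trans ht.1
      exact ⟨hbm, hb, h.isPhi t ht0, h.integrable t ht0,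
        fun ξ hξ hcon => hI (zonal_int (fun c => b c * (1 - c ^ 2)) e ξ he0 hξ hcon), hr0, hhalf t ht⟩
    set x1 : E3 := EuclideanSpace.single 0 r0 with hx1
    have hx1n : ‖x1‖ = r0 := by simp [hx1, abs_of_pos hr0]
    refine ⟨x1, lt_of_le_of_lt ?_ (show φ τ x1 < 1 by
      have := hnd' x1 (by linarith)
      rw [hx1n] at this
      have : 0 < δ * r0 ^ 2 := by positivity
      linarith)⟩
    have hder : ∀ t ∈ Icc τ T, ∃ d ≤ 0, HasDerivAt (fun t' => φ t' x1) d t := by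
      intro t ht
      obtain ⟨d, hd, hdle⟩ := h.hasDeriv (hτ.trans_le ht.1) x1
      refine ⟨d, hdle.trans (le_of_eq ?_), hd⟩
      have hw := hW t ht
      obtain ⟨V, hV⟩ := hw.gauss
      have : ∀ σ, qInt b (φ t) x1 σ = 0 := by
        intro σ
        obtain ⟨hp, hm⟩ := xi_le x1 σ
        unfold qInt
        rw [hw.exp_L (hp.trans hx1n.le), hw.exp_L (hm.trans hx1n.le), hw.exp_L hx1n.le, hV _ (hp.trans hx1n.le),
          hV _ (hm.trans hx1n.le), hV _ hx1n.le, ← Real.exp_add, norm_sq_xiPlus, norm_sq_xiMinus]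
        apply mul_eq_zero_of_right
        rw [sub_eq_zero]
        congr 1; ring
      simp [this]
    have hanti : AntitoneOn (fun t' => φ t' x1) (Icc τ T) := by
      apply antitoneOn_of_deriv_nonpos (convex_Icc _ _)
      · intro t ht
        obtain ⟨d, -, hd⟩ := hder t ht
        exact hd.continuousAt.continuousWithinAt
      · intro t ht
        obtain ⟨d, -, hd⟩ := hder t (interior_subset ht)
        exact hd.differentiableAt.differentiableWithinAt
      · intro t ht
        obtain ⟨d, hd0, hd⟩ := hder t (interior_subset ht)
        rw [hd.deriv]; exact hd0
    exact hanti ⟨le_rfl, hτT.le⟩ ⟨hτT.le, le_rfl⟩ hτT.le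

lemma final_int {g : E3 → ℝ} {a s : ℝ} (ha : 0 < a) (hs : 0 < s)
    (hg : ∀ ξ, g ξ ≤ Real.exp (-(a * ((1 + ‖ξ‖ ^ 2) ^ s - 1)))) (N : ℕ) :
    (∫⁻ ξ : E3, ENNReal.ofReal ((1 + ‖ξ‖ ^ 2) ^ N * g ξ)) < ⊤ := by
  obtain ⟨n, hn⟩ := exists_nat_ge (((N:ℝ) + 2) / s)
  rw [div_le_iff₀ hs] at hn
  set C := Real.exp a * (n.factorial / a ^ n) with hC
  have hI : Integrable (fun ξ : E3 => C * (1 + ‖ξ‖ ^ 2) ^ (-(4:ℝ) / 2)) := by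
    refine Integrable.const_mul (integrable_rpow_neg_one_add_norm_sq (μ := volume) ?_) _
    rw [finrank_euclideanSpace_fin]; norm_num
  refine lt_of_le_of_lt (lintegral_mono fun ξ => ENNReal.ofReal_le_ofReal ?_) hI.lintegral_lt_top
  set w := 1 + ‖ξ‖ ^ 2 with hw
  have hw1 : 1 ≤ w := by rw [hw]; linarith [sq_nonneg ‖ξ‖]
  have hw0 : 0 < w := by linarith
  have h1 := Real.pow_div_factorial_le_exp (a * w ^ s) (by positivity) n
  have h2 : w ^ ((N:ℝ) + 2) ≤ (w ^ s) ^ n := by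
    rw [← Real.rpow_natCast, ← Real.rpow_mul hw0.le]
    apply Real.rpow_le_rpow_of_exponent_le hw1
    linarith
  have h3 : w ^ ((N:ℝ) + 2) * Real.exp (-(a * w ^ s)) ≤ n.factorial / a ^ n := by
    rw [Real.exp_neg, ← div_eq_mul_inv, div_le_iff₀ (Real.exp_pos _)]
    calc w ^ ((N:ℝ) + 2) ≤ (w ^ s) ^ n := h2
      _ = n.factorial / a ^ n * ((a * w ^ s) ^ n / n.factorial) := by
          have : (n.factorial : ℝ) ≠ 0 := by positivity
          rw [mul_pow]; field_simp
      _ ≤ _ := by gcongr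
  have h4 : w ^ N = w ^ ((N:ℝ) + 2) * w ^ (-(4:ℝ) / 2) := by
    rw [← Real.rpow_add hw0, ← Real.rpow_natCast]
    congr 1; ring
  calc w ^ N * g ξ ≤ w ^ N * Real.exp (-(a * (w ^ s - 1))) := by gcongr; exact hg ξ
    _ = (Real.exp a * (w ^ ((N:ℝ) + 2) * Real.exp (-(a * w ^ s)))) * w ^ (-(4:ℝ) / 2) := by
        have : -(a * (w ^ s - 1)) = a + -(a * w ^ s) := by ring
        rw [this, Real.exp_add, h4]; ring
    _ ≤ C * w ^ (-(4:ℝ) / 2) := by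
        rw [hC]; gcongr

/-- global-in-time H^∞ smoothing for non-Dirac initial data with
finite first moment, in the mild singularity case `0 < s < 1/2`. -/
theorem villani_smoothing_global_first_moment
    (s K : ℝ) (hs0 : 0 < s) (hs1 : s < 1/2) (hK : 0 < K)
    (b : ℝ → ℝ) (hb_meas : Measurable b) (hb_nonneg : ∀ x, 0 ≤ b x)
    (hb_sing : KernelSingular b s K)
    (F₀ : Measure E3) [IsProbabilityMeasure F₀]
    (hnotdirac : ∀ v₀ : E3, F₀ {v₀} ≠ 1)
    (hmom1 : (∫⁻ v, ENNReal.ofReal ‖v‖ ∂F₀) < ⊤)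
    (ψ₀ : E3 → ℂ) (hψ₀ : ψ₀ = charFn F₀)
    (ψ : ℝ → E3 → ℂ) (hψ : IsBobylevSolution b ψ ψ₀)
    (hψK : ∀ t ≥ 0, KBdd 1 (ψ t)) (hψcont : KContinuous 1 ψ) :
    ∀ t > (0:ℝ), ∀ N : ℕ,
      (∫⁻ ξ : E3, ENNReal.ofReal ((1 + ‖ξ‖ ^ 2) ^ N * ‖ψ t ξ‖ ^ 2)) < ⊤ := by
  intro T hT N
  have h := phiSol_of_sol hb_meas hb_nonneg hψ
  obtain ⟨k, hk0, c0, hc0, hc1, hkl⟩ := kernel_lower hs0 hK hb_sing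
  have hk : KerLow b s k c0 := ⟨hk0, hc0, hc1, hkl⟩
  obtain ⟨ξ0, hξ0⟩ := exists_lt_one_of_not_dirac F₀ hnotdirac
  have hc : ContinuousWithinAt (fun t => ‖ψ t ξ0‖ ^ 2) (Ici 0) 0 :=
    ((hψ.eq 0 le_rfl ξ0).continuousWithinAt.norm).pow 2
  have hev : ∀ᶠ t in 𝓝[Ici 0] (0:ℝ), ‖ψ t ξ0‖ ^ 2 < 1 := by
    apply hc.eventually_lt_const
    simp only [hψ.init, hψ₀]
    exact hξ0
  have hev2 : ∀ᶠ t in 𝓝[>] (0:ℝ), ‖ψ t ξ0‖ ^ 2 < 1 :=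
    hev.filter_mono (nhdsWithin_mono _ Ioi_subset_Ici_self)
  obtain ⟨τ, hτ1, hτ0, hτT⟩ := (hev2.and (Ioo_mem_nhdsGT hT)).exists
  have hne := persist hb_meas hb_nonneg hk h hτ0 hτT ⟨ξ0, hτ1⟩
  obtain ⟨δ, hδ, t1, ht1, ht1T, hnd⟩ := nd hb_nonneg hk h hT hne one_pos
  obtain ⟨a, ha, hfin⟩ := mp2 hb_nonneg hs0 (by linarith) hk h ht1 ht1T hδ hnd
  exact final_int ha hs0 hfin N
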